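/- arXiv:1706.00234 — 3 statements merged into one kernel-verified Lean document; each statement's English description precedes it below -/
import Mathlib

section
/- Let f₀, f₁, …, f_p : ℝⁿ → ℝ be nonconstant polynomial functions, let S := {x ∈ ℝⁿ : f₁(x) ≤ 0, …, f_p(x) ≤ 0} be nonempty, and assume f₀ is bounded from below on S. If the Mangasarian–Fromovitz property at infinity ((MF)∞) holds for the problem inf_{x ∈ S} f₀(x) and the polynomial f₀ is convenient, then the problem has at least one optimal solution, i.e., there exists x* ∈ S with f₀(x*) = inf_{x ∈ S} f₀(x). -/
open MvPolynomial Set Filter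
open scoped Classical

noncomputable section

/-- The exponent vector of a monomial, viewed as a point of `ℝⁿ`. -/
def expVec {n : ℕ} (κ : Fin n →₀ ℕ) : Fin n → ℝ := fun j => (κ j : ℝ)

/-- The Newton polyhedron at infinity `Γ(f)`: the convex hull of the support of `f`. -/
def NewtonPolyhedron {n : ℕ} (f : MvPolynomial (Fin n) ℝ) : Set (Fin n → ℝ) :=
  convexHull ℝ (expVec '' (f.support : Set (Fin n →₀ ℕ)))

/-- `d(q, Γ(f)) := min {⟨q, κ⟩ : κ ∈ Γ(f)}`. -/
def NewtonD {n : ℕ} (f : MvPolynomial (Fin n) ℝ) (q : Fin n → ℝ) : ℝ :=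
  sInf ((fun κ : Fin n → ℝ => ∑ j, q j * κ j) '' NewtonPolyhedron f)

/-- `Δ(q, Γ(f)) := {κ ∈ Γ(f) : ⟨q, κ⟩ = d(q, Γ(f))}`. -/
def NewtonFace {n : ℕ} (f : MvPolynomial (Fin n) ℝ) (q : Fin n → ℝ) : Set (Fin n → ℝ) :=
  {κ ∈ NewtonPolyhedron f | ∑ j, q j * κ j = NewtonD f q}

/-- For a set `Δ ⊆ ℝⁿ`, the polynomial `f_Δ := ∑_{κ ∈ Δ} a_κ x^κ`. -/
def facePoly {n : ℕ} (f : MvPolynomial (Fin n) ℝ) (Δ : Set (Fin n → ℝ)) :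
    MvPolynomial (Fin n) ℝ :=
  ∑ κ ∈ f.support.filter (fun κ => expVec κ ∈ Δ), monomial κ (f.coeff κ)

/-- `ℝ^J := {x ∈ ℝⁿ : x_j = 0 for all j ∉ J}`. -/
def RJ {n : ℕ} (J : Set (Fin n)) : Set (Fin n → ℝ) := {x | ∀ j ∉ J, x j = 0}

/-- The restriction of `f` to `ℝ^J` is not constant. -/
def NotConstOn {n : ℕ} (f : MvPolynomial (Fin n) ℝ) (J : Set (Fin n)) : Prop :=
  ∃ x ∈ RJ J, ∃ y ∈ RJ J, eval x f ≠ eval y f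

/-- The Mangasarian–Fromovitz property at infinity for `inf {f 0 x : f i x ≤ 0, i = 1,…,p}`. -/
def MFinfty {n p : ℕ} (f : Fin (p + 1) → MvPolynomial (Fin n) ℝ) : Prop :=
  ∀ J : Set (Fin n), J.Nonempty → ∀ q x : Fin n → ℝ,
    NewtonD (f 0) q < 0 →
    (∀ i, NotConstOn (f i) J → NewtonFace (f i) q ⊆ RJ J) →
    (∀ j, x j = 0 ↔ j ∉ J) →
    (∀ i, i ≠ 0 → eval x (facePoly (f i) (NewtonFace (f i) q)) ≤ 0) →
    ∃ v : Fin n → ℝ, v ≠ 0 ∧ ∀ i, NotConstOn (f i) J →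
      eval x (facePoly (f i) (NewtonFace (f i) q)) = 0 →
      ∑ j, eval x (pderiv j (facePoly (f i) (NewtonFace (f i) q))) * v j < 0

/-- Kouchnirenko non-degeneracy at infinity. -/
def NondegenerateAtInfinity {n : ℕ} (f : MvPolynomial (Fin n) ℝ) : Prop :=
  ∀ q : Fin n → ℝ, NewtonD f q < 0 →
    ∀ x : Fin n → ℝ, (∀ j, x j ≠ 0) →
      ¬ ∀ j, eval x (pderiv j (facePoly f (NewtonFace f q))) = 0

/-- A convenient polynomial. -/
def Convenient {n : ℕ} (f : MvPolynomial (Fin n) ℝ) : Prop :=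
  ∀ j : Fin n, ∃ c : ℝ, 0 < c ∧ c • (Pi.single j 1 : Fin n → ℝ) ∈ NewtonPolyhedron f

/-- A bad face of `Γ(f)`. -/
def BadFace {n : ℕ} (f : MvPolynomial (Fin n) ℝ) (Δ : Set (Fin n → ℝ)) : Prop :=
  (∃ q : Fin n → ℝ, Δ = NewtonFace f q) ∧
  (0 : Fin n → ℝ) ∈ affineSpan ℝ Δ ∧
  ∃ q : Fin n → ℝ, (∃ i j, q i * q j < 0) ∧
    {κ : Fin n → ℝ | ∑ j, q j * κ j = 0} ∩ NewtonPolyhedron f = Δ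

/-- The set of critical values of `f`. -/
def K0 {n : ℕ} (f : MvPolynomial (Fin n) ℝ) : Set ℝ :=
  {c | ∃ x : Fin n → ℝ, (∀ j, eval x (pderiv j f) = 0) ∧ eval x f = c}

/-- `Σ∞(f)`: critical values of `f_Δ` over all bad faces `Δ`. -/
def SigmaInfty {n : ℕ} (f : MvPolynomial (Fin n) ℝ) : Set ℝ :=
  {c | ∃ Δ : Set (Fin n → ℝ), BadFace f Δ ∧ ∃ x : Fin n → ℝ,
    (∀ j, eval x (pderiv j (facePoly f Δ)) = 0) ∧ eval x (facePoly f Δ) = c}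

/-- `Σ∞'(f)`: critical values of `f_Δ` on `(ℝ ∖ {0})ⁿ` over all bad faces `Δ`. -/
def SigmaInfty' {n : ℕ} (f : MvPolynomial (Fin n) ℝ) : Set ℝ :=
  {c | ∃ Δ : Set (Fin n → ℝ), BadFace f Δ ∧ ∃ x : Fin n → ℝ, (∀ j, x j ≠ 0) ∧
    (∀ j, eval x (pderiv j (facePoly f Δ)) = 0) ∧ eval x (facePoly f Δ) = c}

/-- The Euclidean norm on `Fin k → ℝ`. -/
def euclNorm {k : ℕ} (x : Fin k → ℝ) : ℝ := Real.sqrt (∑ j, (x j) ^ 2)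

/-- Basic semialgebraic subsets of `ℝ^m`. -/
def BasicSA {m : ℕ} (A : Set (Fin m → ℝ)) : Prop :=
  ∃ (k l : ℕ) (g : Fin k → MvPolynomial (Fin m) ℝ) (h : Fin l → MvPolynomial (Fin m) ℝ),
    A = {x | (∀ i, eval x (g i) = 0) ∧ ∀ i, 0 < eval x (h i)}

/-- Semialgebraic subsets of `ℝ^m`: finite unions of basic semialgebraic sets. -/
def IsSA {m : ℕ} (A : Set (Fin m → ℝ)) : Prop :=
  ∃ (N : ℕ) (B : Fin N → Set (Fin m → ℝ)), (∀ i, BasicSA (B i)) ∧ A = ⋃ i, B i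

/-- A semialgebraic scalar function on a domain `D ⊆ ℝ` (graph is semialgebraic). -/
def IsSAFunOn (D : Set ℝ) (f : ℝ → ℝ) : Prop :=
  IsSA {z : Fin 2 → ℝ | z 0 ∈ D ∧ z 1 = f (z 0)}

/-- A semialgebraic curve `D → ℝⁿ` (graph is semialgebraic). -/
def IsSACurve {n : ℕ} (D : Set ℝ) (φ : ℝ → Fin n → ℝ) : Prop :=
  IsSA {z : Fin (n + 1) → ℝ | z 0 ∈ D ∧ ∀ j : Fin n, z j.succ = φ (z 0) j}

/-- A semialgebraic map `ℝⁿ → ℝ^p` (graph is semialgebraic). -/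
def IsSAMap {n p : ℕ} (F : (Fin n → ℝ) → (Fin p → ℝ)) : Prop :=
  IsSA {z : Fin (n + p) → ℝ |
    (fun i : Fin p => z (Fin.natAdd n i)) = F (fun j : Fin n => z (Fin.castAdd p j))}

open Topology in
lemma fw_scale {n : ℕ} (U : Ultrafilter ℕ) (D : Finset (Fin n → ℝ)) (u : ℕ → Fin n → ℝ) :
    ∃ q w : Fin n → ℝ, ∀ δ ∈ D,
      (δ ⬝ᵥ q = 0 ∧ Tendsto (fun k => δ ⬝ᵥ u k) U (𝓝 (δ ⬝ᵥ w))) ∨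
      (δ ⬝ᵥ q < 0 ∧ Tendsto (fun k => δ ⬝ᵥ u k) U atTop) ∨
      (0 < δ ⬝ᵥ q ∧ Tendsto (fun k => δ ⬝ᵥ u k) U atBot) := by
  have tri : ∀ a : ℕ → ℝ, (∃ L, Tendsto a U (𝓝 L)) ∨ Tendsto a U atTop ∨ Tendsto a U atBot := by
    intro a
    by_cases h1 : Tendsto a U atTop
    · exact Or.inr (Or.inl h1)
    by_cases h2 : Tendsto a U atBot
    · exact Or.inr (Or.inr h2)
    left
    rw [tendsto_atTop] at h1
    rw [tendsto_atBot] at h2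
    push Not at h1 h2
    obtain ⟨b, hb⟩ := h1
    obtain ⟨c, hc⟩ := h2
    have hb' := Ultrafilter.eventually_not.2 (by simpa [Filter.not_eventually] using hb :
      ¬ ∀ᶠ k in (U : Filter ℕ), b ≤ a k)
    have hc' := Ultrafilter.eventually_not.2 (by simpa [Filter.not_eventually] using hc :
      ¬ ∀ᶠ k in (U : Filter ℕ), a k ≤ c)
    have hm : (U.map a : Filter ℝ) ≤ 𝓟 (Icc c b) := by
      rw [Filter.le_principal_iff]
      change ∀ᶠ k in (U : Filter ℕ), a k ∈ Icc c b
      filter_upwards [hb', hc'] with k h1 h2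
      exact ⟨by linarith [not_le.1 h2], by linarith [not_le.1 h1]⟩
    obtain ⟨L, _, hL⟩ := (isCompact_Icc (a := c) (b := b)).ultrafilter_le_nhds _ hm
    exact ⟨L, hL⟩
  let P : (Fin n → ℝ) → Prop := fun δ => ∃ L, Tendsto (fun k => δ ⬝ᵥ u k) U (𝓝 L)
  let D0 := D.filter P
  have hD0 : ∀ δ : D0, ∃ L, Tendsto (fun k => (δ : Fin n → ℝ) ⬝ᵥ u k) U (𝓝 L) := fun δ =>
    (Finset.mem_filter.1 δ.2).2
  choose L hL using hD0
  let A : (Fin n → ℝ) →ₗ[ℝ] (D0 → ℝ) := Matrix.mulVecLin (Matrix.of fun δ : D0 => (δ : Fin n → ℝ))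
  have hA : ∀ z δ, A z δ = (δ : Fin n → ℝ) ⬝ᵥ z := fun z δ => rfl
  obtain ⟨B, hB⟩ := A.rangeRestrict.exists_rightInverse_of_surjective (LinearMap.range_rangeRestrict A)
  have hBA : ∀ y, A.rangeRestrict (B y) = y := fun y => by
    rw [← LinearMap.comp_apply, hB]; rfl
  have hlim : Tendsto (fun k => A (u k)) U (𝓝 L) := by
    rw [tendsto_pi_nhds]
    exact fun δ => hL δ
  have hLr : L ∈ LinearMap.range A :=
    (Submodule.closed_of_finiteDimensional (LinearMap.range A)).mem_of_tendsto hlim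
      (Eventually.of_forall fun k => ⟨u k, rfl⟩)
  have hlim' : Tendsto (fun k => A.rangeRestrict (u k)) U (𝓝 ⟨L, hLr⟩) := by
    rw [tendsto_subtype_rng]; exact hlim
  have hBc : Continuous B := LinearMap.continuous_of_finiteDimensional B
  let wk : ℕ → Fin n → ℝ := fun k => B (A.rangeRestrict (u k))
  let w : Fin n → ℝ := B ⟨L, hLr⟩
  have hwk : Tendsto wk U (𝓝 w) := (hBc.tendsto _).comp hlim'
  have hwd : ∀ δ : Fin n → ℝ, Tendsto (fun k => δ ⬝ᵥ wk k) U (𝓝 (δ ⬝ᵥ w)) := by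
    intro δ
    have : Continuous fun z : Fin n → ℝ => δ ⬝ᵥ z := by
      unfold dotProduct; fun_prop
    exact (this.tendsto _).comp hwk
  have h0 : ∀ δ : D0, ∀ k, (δ : Fin n → ℝ) ⬝ᵥ wk k = (δ : Fin n → ℝ) ⬝ᵥ u k := by
    intro δ k
    have := congrArg (fun z : LinearMap.range A => (z : D0 → ℝ) δ) (hBA (A.rangeRestrict (u k)))
    exact this
  have hev : ∀ᶠ k in (U : Filter ℕ), ∀ δ ∈ D,
      (Tendsto (fun k => δ ⬝ᵥ u k) U atTop → 0 < δ ⬝ᵥ (u k - wk k)) ∧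
      (Tendsto (fun k => δ ⬝ᵥ u k) U atBot → δ ⬝ᵥ (u k - wk k) < 0) := by
    rw [Filter.eventually_all_finset]
    intro δ _
    apply Filter.Eventually.and
    · by_cases h : Tendsto (fun k => δ ⬝ᵥ u k) U atTop
      · have := (h.atTop_add (hwd δ).neg).eventually_gt_atTop 0
        filter_upwards [this] with k hk _
        rw [dotProduct_sub]; linarith
      · exact Eventually.of_forall fun _ h' => absurd h' h
    · by_cases h : Tendsto (fun k => δ ⬝ᵥ u k) U atBot
      · have := (h.atBot_add (hwd δ).neg).eventually_lt_atBot 0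
        filter_upwards [this] with k hk _
        rw [dotProduct_sub]; linarith
      · exact Eventually.of_forall fun _ h' => absurd h' h
  obtain ⟨k, hk⟩ := hev.exists
  refine ⟨-(u k - wk k), w, fun δ hδ => ?_⟩
  rcases tri (fun k => δ ⬝ᵥ u k) with h | h | h
  · left
    have hm : δ ∈ D0 := Finset.mem_filter.2 ⟨hδ, h⟩
    have h0' := h0 ⟨δ, hm⟩
    simp only at h0'
    refine ⟨by rw [dotProduct_neg, dotProduct_sub, h0' k]; simp, ?_⟩
    have := hwd δ
    simpa only [h0'] using this
  · right; left
    exact ⟨by rw [dotProduct_neg]; linarith [(hk δ hδ).1 h], h⟩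
  · right; right
    exact ⟨by rw [dotProduct_neg]; linarith [(hk δ hδ).2 h], h⟩

lemma fw_mono {n : ℕ} (σ a : Fin n → ℝ) (κ : Fin n →₀ ℕ) :
    ∏ j, (σ j * Real.exp (a j)) ^ κ j = (∏ j, σ j ^ κ j) * Real.exp (expVec κ ⬝ᵥ a) := by
  simp only [mul_pow, Finset.prod_mul_distrib, dotProduct, expVec, Real.exp_sum]
  congr 1
  refine Finset.prod_congr rfl fun j _ => ?_
  rw [← Real.exp_nat_mul]

lemma fw_eval {n : ℕ} (f : MvPolynomial (Fin n) ℝ) (σ a : Fin n → ℝ) :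
    eval (fun j => σ j * Real.exp (a j)) f =
      ∑ κ ∈ f.support, (f.coeff κ * ∏ j, σ j ^ κ j) * Real.exp (expVec κ ⬝ᵥ a) := by
  rw [eval_eq']
  refine Finset.sum_congr rfl fun κ _ => ?_
  rw [fw_mono, mul_assoc]

lemma fw_face_eval {n : ℕ} (f : MvPolynomial (Fin n) ℝ) (Δ : Set (Fin n → ℝ)) (σ a : Fin n → ℝ) :
    eval (fun j => σ j * Real.exp (a j)) (facePoly f Δ) =
      ∑ κ ∈ f.support.filter (fun κ => expVec κ ∈ Δ),
        (f.coeff κ * ∏ j, σ j ^ κ j) * Real.exp (expVec κ ⬝ᵥ a) := by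
  unfold facePoly
  rw [map_sum]
  refine Finset.sum_congr rfl fun κ _ => ?_
  rw [eval_monomial, Finsupp.prod_fintype _ _ (by simp), fw_mono, mul_assoc]

lemma fw_face_pderiv {n : ℕ} (f : MvPolynomial (Fin n) ℝ) (Δ : Set (Fin n → ℝ)) (σ a : Fin n → ℝ)
    (j : Fin n) :
    (σ j * Real.exp (a j)) * eval (fun j => σ j * Real.exp (a j)) (pderiv j (facePoly f Δ)) =
      ∑ κ ∈ f.support.filter (fun κ => expVec κ ∈ Δ),
        (f.coeff κ * ∏ j, σ j ^ κ j) * Real.exp (expVec κ ⬝ᵥ a) * (κ j : ℝ) := by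
  unfold facePoly
  rw [map_sum, map_sum, Finset.mul_sum]
  refine Finset.sum_congr rfl fun κ _ => ?_
  have h := X_mul_pderiv_monomial (R := ℝ) (m := κ) (r := f.coeff κ) (i := j)
  have h2 := congrArg (eval (fun j => σ j * Real.exp (a j))) h
  rw [map_mul, eval_X] at h2
  rw [h2, map_nsmul, eval_monomial, Finsupp.prod_fintype _ _ (by simp), fw_mono, nsmul_eq_mul]
  ring

lemma fw_supp_mem {n : ℕ} {f : MvPolynomial (Fin n) ℝ} {κ : Fin n →₀ ℕ} (h : κ ∈ f.support) :
    expVec κ ∈ NewtonPolyhedron f :=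
  subset_convexHull ℝ _ ⟨κ, h, rfl⟩

lemma fw_hull {n : ℕ} (f : MvPolynomial (Fin n) ℝ) (q : Fin n → ℝ) (d : ℝ)
    (h : ∀ κ ∈ f.support, d ≤ expVec κ ⬝ᵥ q) : ∀ z ∈ NewtonPolyhedron f, d ≤ z ⬝ᵥ q := by
  intro z hz
  have hc : Convex ℝ {z : Fin n → ℝ | d ≤ z ⬝ᵥ q} := by
    apply convex_halfSpace_ge
    constructor
    · intro x y; exact add_dotProduct x y q
    · intro c x; exact smul_dotProduct c x q
  refine convexHull_min ?_ hc hz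
  rintro _ ⟨κ, hκ, rfl⟩
  exact h κ hκ

lemma fw_D {n : ℕ} (f : MvPolynomial (Fin n) ℝ) (q : Fin n → ℝ) (κ₀ : Fin n →₀ ℕ)
    (h0 : κ₀ ∈ f.support)
    (h : ∀ κ ∈ f.support, expVec κ₀ ⬝ᵥ q ≤ expVec κ ⬝ᵥ q) :
    NewtonD f q = expVec κ₀ ⬝ᵥ q := by
  unfold NewtonD
  apply IsLeast.csInf_eq
  constructor
  · refine ⟨expVec κ₀, fw_supp_mem h0, ?_⟩
    exact dotProduct_comm q _
  · rintro _ ⟨z, hz, rfl⟩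
    have := fw_hull f q _ h z hz
    rw [dotProduct_comm z q] at this
    exact this

lemma fw_mem_face {n : ℕ} (f : MvPolynomial (Fin n) ℝ) (q : Fin n → ℝ) (κ₀ κ : Fin n →₀ ℕ)
    (h0 : κ₀ ∈ f.support) (hκ : κ ∈ f.support)
    (h : ∀ κ ∈ f.support, expVec κ₀ ⬝ᵥ q ≤ expVec κ ⬝ᵥ q) :
    expVec κ ∈ NewtonFace f q ↔ expVec κ ⬝ᵥ q = expVec κ₀ ⬝ᵥ q := by
  rw [← fw_D f q κ₀ h0 h, dotProduct_comm]
  exact ⟨fun h => h.2, fun h => ⟨fw_supp_mem hκ, h⟩⟩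

/-- If every support exponent in the face lies in `ℝ^J`, so does the face. -/
lemma fw_face_sub {n : ℕ} (f : MvPolynomial (Fin n) ℝ) (q : Fin n → ℝ) (κ₀ : Fin n →₀ ℕ)
    (h0 : κ₀ ∈ f.support)
    (h : ∀ κ ∈ f.support, expVec κ₀ ⬝ᵥ q ≤ expVec κ ⬝ᵥ q) (J : Set (Fin n))
    (hJ : ∀ κ ∈ f.support, expVec κ ∉ RJ J → expVec κ₀ ⬝ᵥ q < expVec κ ⬝ᵥ q) :
    NewtonFace f q ⊆ RJ J := by
  intro z hz j hj
  have hd : z ⬝ᵥ q = expVec κ₀ ⬝ᵥ q := by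
    rw [← fw_D f q κ₀ h0 h, dotProduct_comm]; exact hz.2
  have hz0 : 0 ≤ z j := by
    have := fw_hull f (Pi.single j 1) 0 (fun κ _ => by simp [expVec]) z hz.1
    simpa using this
  -- find ε
  obtain ⟨ε, hε, hεh⟩ : ∃ ε : ℝ, 0 < ε ∧ ∀ κ ∈ f.support,
      expVec κ₀ ⬝ᵥ q ≤ expVec κ ⬝ᵥ (q - ε • Pi.single j 1) := by
    have key : ∀ κ ∈ f.support, ∀ᶠ ε in nhdsWithin (0 : ℝ) (Ioi 0),
        expVec κ₀ ⬝ᵥ q ≤ expVec κ ⬝ᵥ (q - ε • Pi.single j 1) := by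
      intro κ hκ
      have e : ∀ ε : ℝ, expVec κ ⬝ᵥ (q - ε • Pi.single j 1) = expVec κ ⬝ᵥ q - ε * κ j := by
        intro ε
        rw [dotProduct_sub, dotProduct_smul, dotProduct_single]; simp [expVec]
      simp only [e]
      by_cases hm : expVec κ ∈ RJ J
      · have : (κ j : ℝ) = 0 := hm j hj
        exact Eventually.of_forall fun ε => by rw [this]; simpa using h κ hκ
      · have h1 := hJ κ hκ hm
        have hc : Continuous fun ε : ℝ => expVec κ ⬝ᵥ q - ε * κ j := by fun_prop
        have := (hc.tendsto 0).eventually_const_lt (u := expVec κ₀ ⬝ᵥ q) (by simpa using h1)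
        filter_upwards [nhdsWithin_le_nhds this] with ε hε using hε.le
    have := ((Filter.eventually_all_finset f.support).2 key).and self_mem_nhdsWithin
    obtain ⟨ε, h1, h2⟩ := this.exists
    exact ⟨ε, h2, h1⟩
  have := fw_hull f _ _ hεh z hz.1
  rw [dotProduct_sub, dotProduct_smul, hd] at this
  simp at this
  nlinarith

open Topology in
lemma fw_descent {ι : Type*} (s : Finset ι) (A b B : ι → ℝ)
    (h : ∑ κ ∈ s, A κ * Real.exp (b κ) * B κ < 0) :
    ∀ᶠ ε in 𝓝[>] (0 : ℝ), ∑ κ ∈ s, A κ * Real.exp (b κ + ε * B κ) < ∑ κ ∈ s, A κ * Real.exp (b κ) := by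
  have hd : HasDerivAt (fun ε : ℝ => ∑ κ ∈ s, A κ * Real.exp (b κ + ε * B κ))
      (∑ κ ∈ s, A κ * Real.exp (b κ) * B κ) 0 := by
    apply HasDerivAt.fun_sum
    intro κ _
    have h1 : HasDerivAt (fun ε : ℝ => b κ + ε * B κ) (B κ) 0 := by
      simpa using ((hasDerivAt_id (0 : ℝ)).mul_const (B κ)).const_add (b κ)
    have h2 := (h1.exp).const_mul (A κ)
    simpa [mul_assoc] using h2
  have h3 := hasDerivAt_iff_tendsto_slope.1 hd
  have h4 : ∀ᶠ ε in 𝓝[>] (0 : ℝ), slope (fun ε : ℝ => ∑ κ ∈ s, A κ * Real.exp (b κ + ε * B κ)) 0 ε < 0 :=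
    (h3.mono_left (nhdsWithin_mono _ (fun x hx => ne_of_gt hx))).eventually (eventually_lt_nhds h)
  filter_upwards [h4, self_mem_nhdsWithin] with ε hε hpos
  have hpos : (0 : ℝ) < ε := hpos
  rw [slope_def_field, div_neg_iff] at hε
  simp only [zero_mul, add_zero, sub_zero] at hε
  rcases hε with h | h <;> linarith

/-- The minimizing sequence. -/
lemma fw_seq {n : ℕ} (g : MvPolynomial (Fin n) ℝ) (S : Set (Fin n → ℝ)) (hSc : IsClosed S)
    (hne : S.Nonempty) (hno : ¬ ∃ xs ∈ S, ∀ y ∈ S, eval xs g ≤ eval y g) :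
    ∃ x : ℕ → Fin n → ℝ, (∀ᶠ k in (hyperfilter ℕ : Filter ℕ),
        x k ∈ S ∧ ∀ y ∈ S, ‖y‖ ≤ ‖x k‖ → eval (x k) g ≤ eval y g) ∧
      (∃ C, ∀ᶠ k in (hyperfilter ℕ : Filter ℕ), eval (x k) g ≤ C) ∧
      Tendsto (fun k => ‖x k‖) (hyperfilter ℕ : Filter ℕ) atTop := by
  obtain ⟨s, hs⟩ := hne
  have hex : ∀ k : ℕ, ∃ x, ‖s‖ ≤ k → x ∈ S ∧ ‖x‖ ≤ k ∧ ∀ y ∈ S, ‖y‖ ≤ k → eval x g ≤ eval y g := by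
    intro k
    by_cases hk : ‖s‖ ≤ k
    · have hcpt : IsCompact (Metric.closedBall (0 : Fin n → ℝ) k ∩ S) :=
        (isCompact_closedBall _ _).inter_right hSc
      obtain ⟨x, hx, hmin⟩ := hcpt.exists_isMinOn ⟨s, by simpa using hk, hs⟩
        (f := fun x => eval x g) (MvPolynomial.continuous_eval g).continuousOn
      refine ⟨x, fun _ => ⟨hx.2, by simpa using hx.1, fun y hy hyk => hmin ⟨by simpa using hyk, hy⟩⟩⟩
    · exact ⟨0, fun h => absurd h hk⟩
  choose x hx using hex
  have hle : (hyperfilter ℕ : Filter ℕ) ≤ atTop := by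
    rw [← Nat.cofinite_eq_atTop]; exact hyperfilter_le_cofinite
  have hge : ∀ a : ℝ, ∀ᶠ k : ℕ in (hyperfilter ℕ : Filter ℕ), a ≤ k := fun a =>
    hle ((tendsto_natCast_atTop_atTop (R := ℝ)).eventually_ge_atTop a)
  refine ⟨x, ?_, ⟨eval s g, ?_⟩, ?_⟩
  · filter_upwards [hge ‖s‖] with k hk
    obtain ⟨h1, h2, h3⟩ := hx k hk
    exact ⟨h1, fun y hy hyk => h3 y hy (hyk.trans h2)⟩
  · filter_upwards [hge ‖s‖] with k hk
    exact (hx k hk).2.2 s hs hk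
  · rw [tendsto_atTop]
    by_contra hcon
    push Not at hcon
    obtain ⟨R, hR⟩ := hcon
    have hR' := Ultrafilter.eventually_not.2 (by simpa [Filter.not_eventually] using hR :
      ¬ ∀ᶠ k in (hyperfilter ℕ : Filter ℕ), R ≤ ‖x k‖)
    apply hno
    obtain ⟨m, hm⟩ := exists_nat_ge (max R ‖s‖)
    obtain ⟨h1, h2, h3⟩ := hx m ((le_max_right _ _).trans hm)
    refine ⟨x m, h1, fun y hy => ?_⟩
    obtain ⟨k, ⟨hk1, hk2⟩, hk3⟩ := ((hR'.and (hge ‖s‖)).and (hge ‖y‖)).exists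
    obtain ⟨g1, g2, g3⟩ := hx k hk2
    exact (h3 _ g1 (by linarith [not_le.1 hk1, le_max_left R ‖s‖])).trans (g3 y hy hk3)

/-- The trichotomy relating a direction `δ` to the scaling data. -/
def FWTri {n : ℕ} (U : Ultrafilter ℕ) (u : ℕ → Fin n → ℝ) (q w δ : Fin n → ℝ) : Prop :=
  (δ ⬝ᵥ q = 0 ∧ Tendsto (fun k => δ ⬝ᵥ u k) U (nhds (δ ⬝ᵥ w))) ∨
  (δ ⬝ᵥ q < 0 ∧ Tendsto (fun k => δ ⬝ᵥ u k) U atTop) ∨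
  (0 < δ ⬝ᵥ q ∧ Tendsto (fun k => δ ⬝ᵥ u k) U atBot)

lemma FWTri.zero {n : ℕ} {U : Ultrafilter ℕ} {u : ℕ → Fin n → ℝ} {q w δ : Fin n → ℝ}
    (h : FWTri U u q w δ) (h0 : δ ⬝ᵥ q = 0) :
    Tendsto (fun k => δ ⬝ᵥ u k) U (nhds (δ ⬝ᵥ w)) := by
  rcases h with h | h | h
  · exact h.2
  · linarith [h.1]
  · linarith [h.1]

lemma FWTri.neg {n : ℕ} {U : Ultrafilter ℕ} {u : ℕ → Fin n → ℝ} {q w δ : Fin n → ℝ}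
    (h : FWTri U u q w δ) (h0 : δ ⬝ᵥ q < 0) :
    Tendsto (fun k => δ ⬝ᵥ u k) U atTop := by
  rcases h with h | h | h
  · linarith [h.1]
  · exact h.2
  · linarith [h.1]

lemma FWTri.pos {n : ℕ} {U : Ultrafilter ℕ} {u : ℕ → Fin n → ℝ} {q w δ : Fin n → ℝ}
    (h : FWTri U u q w δ) (h0 : 0 < δ ⬝ᵥ q) :
    Tendsto (fun k => δ ⬝ᵥ u k) U atBot := by
  rcases h with h | h | h
  · linarith [h.1]
  · linarith [h.1]
  · exact h.2

lemma FWTri.pos_of {n : ℕ} {U : Ultrafilter ℕ} {u : ℕ → Fin n → ℝ} {q w δ : Fin n → ℝ}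
    (h : FWTri U u q w δ) (h0 : Tendsto (fun k => δ ⬝ᵥ u k) U atBot) : 0 < δ ⬝ᵥ q := by
  rcases h with h | h | h
  · exact absurd h0 (not_tendsto_atBot_of_tendsto_nhds h.2)
  · obtain ⟨k, h1, h2⟩ := ((h.2.eventually_gt_atTop 0).and (h0.eventually_lt_atBot 0)).exists
    linarith
  · exact h.1

lemma FWTri.neg_of {n : ℕ} {U : Ultrafilter ℕ} {u : ℕ → Fin n → ℝ} {q w δ : Fin n → ℝ}
    (h : FWTri U u q w δ) (h0 : Tendsto (fun k => δ ⬝ᵥ u k) U atTop) : δ ⬝ᵥ q < 0 := by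
  rcases h with h | h | h
  · exact absurd h0 (not_tendsto_atTop_of_tendsto_nhds h.2)
  · exact h.1
  · obtain ⟨k, h1, h2⟩ := ((h0.eventually_gt_atTop 0).and (h.2.eventually_lt_atBot 0)).exists
    linarith

open Topology in
lemma fw_lim {n : ℕ} (U : Ultrafilter ℕ) (u : ℕ → Fin n → ℝ) (q w : Fin n → ℝ)
    (f : MvPolynomial (Fin n) ℝ) (κ₀ : Fin n →₀ ℕ) (h0 : κ₀ ∈ f.support)
    (hmin : ∀ κ ∈ f.support, expVec κ₀ ⬝ᵥ q ≤ expVec κ ⬝ᵥ q)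
    (htri : ∀ κ ∈ f.support, FWTri U u q w (expVec κ - expVec κ₀))
    (c : (Fin n →₀ ℕ) → ℝ) :
    Tendsto (fun k => (∑ κ ∈ f.support, c κ * Real.exp (expVec κ ⬝ᵥ u k)) *
        Real.exp (-(expVec κ₀ ⬝ᵥ (u k - w)))) U
      (𝓝 (∑ κ ∈ f.support.filter (fun κ => expVec κ ∈ NewtonFace f q),
        c κ * Real.exp (expVec κ ⬝ᵥ w))) := by
  rw [Finset.sum_filter]
  simp only [Finset.sum_mul]
  refine tendsto_finsetSum _ fun κ hκ => ?_
  have e : ∀ k, c κ * Real.exp (expVec κ ⬝ᵥ u k) * Real.exp (-(expVec κ₀ ⬝ᵥ (u k - w))) =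
      c κ * Real.exp ((expVec κ - expVec κ₀) ⬝ᵥ u k + expVec κ₀ ⬝ᵥ w) := by
    intro k
    rw [mul_assoc, ← Real.exp_add, sub_dotProduct, dotProduct_sub]
    congr 2; ring
  simp only [e]
  have ht := htri κ hκ
  have hm := hmin κ hκ
  split_ifs with hf
  · rw [fw_mem_face f q κ₀ κ h0 hκ hmin] at hf
    have h1 := ht.zero (by rw [sub_dotProduct, hf, sub_self])
    have h2 := (Real.continuous_exp.tendsto _).comp (h1.add_const (expVec κ₀ ⬝ᵥ w))
    have h3 := h2.const_mul (c κ)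
    simpa [sub_dotProduct, Function.comp_def] using h3
  · rw [fw_mem_face f q κ₀ κ h0 hκ hmin] at hf
    have hlt := lt_of_le_of_ne hm (Ne.symm hf)
    have h1 := ht.pos (by rw [sub_dotProduct]; linarith)
    have h2 := Real.tendsto_exp_atBot.comp (tendsto_atBot_add_const_right _ (expVec κ₀ ⬝ᵥ w) h1)
    simpa [Function.comp_def] using h2.const_mul (c κ)

lemma fw_const {n : ℕ} (f : MvPolynomial (Fin n) ℝ) (J : Set (Fin n)) (h : NotConstOn f J) :
    ∃ κ ∈ f.support, expVec κ ∈ RJ J := by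
  by_contra hcon
  push Not at hcon
  have key : ∀ x ∈ RJ J, eval x f = 0 := by
    intro x hx
    rw [eval_eq']
    refine Finset.sum_eq_zero fun κ hκ => ?_
    have := hcon κ hκ
    simp only [RJ, Set.mem_ofPred_eq, not_forall] at this
    obtain ⟨j, hj, hne⟩ := this
    rw [Finset.prod_eq_zero (Finset.mem_univ j), mul_zero]
    rw [hx j hj, zero_pow]
    intro h0
    exact hne (by simp [expVec, h0])
  obtain ⟨x, hx, y, hy, hxy⟩ := h
  exact hxy ((key x hx).trans (key y hy).symm)

lemma fw_conv_supp {n : ℕ} (f : MvPolynomial (Fin n) ℝ) (hf : Convenient f) (j₀ : Fin n) :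
    ∃ a : ℕ, a ≠ 0 ∧ Finsupp.single j₀ a ∈ f.support := by
  by_contra hcon
  push Not at hcon
  obtain ⟨c, hc, hmem⟩ := hf j₀
  let M : ℝ := ∑ κ ∈ f.support, (κ j₀ : ℝ)
  have hM0 : 0 ≤ M := Finset.sum_nonneg fun κ _ => Nat.cast_nonneg _
  have := fw_hull f (fun j => if j = j₀ then -1 else M) 0 ?_ _ hmem
  · rw [smul_dotProduct, single_dotProduct] at this
    simp at this
    linarith
  intro κ hκ
  have hsplit : expVec κ ⬝ᵥ (fun j => if j = j₀ then -1 else M) =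
      -(κ j₀ : ℝ) + ∑ j ∈ Finset.univ.erase j₀, (κ j : ℝ) * M := by
    unfold dotProduct
    rw [← Finset.add_sum_erase _ _ (Finset.mem_univ j₀)]
    congr 1
    · simp [expVec]
    · refine Finset.sum_congr rfl fun j hj => ?_
      simp only [if_neg (Finset.ne_of_mem_erase hj), expVec]
  rw [hsplit]
  have hnn : ∀ j ∈ Finset.univ.erase j₀, 0 ≤ (κ j : ℝ) * M := fun j _ => by positivity
  by_cases h : ∃ j, j ≠ j₀ ∧ κ j ≠ 0
  · obtain ⟨j, hj, hne⟩ := h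
    have h1 : (κ j : ℝ) * M ≤ ∑ j ∈ Finset.univ.erase j₀, (κ j : ℝ) * M :=
      Finset.single_le_sum hnn (Finset.mem_erase.2 ⟨hj, Finset.mem_univ _⟩)
    have h2 : (1 : ℝ) ≤ κ j := by exact_mod_cast Nat.one_le_iff_ne_zero.2 hne
    have h3 : (κ j₀ : ℝ) ≤ M :=
      Finset.single_le_sum (f := fun κ : Fin n →₀ ℕ => (κ j₀ : ℝ)) (fun κ _ => Nat.cast_nonneg _) hκ
    nlinarith
  · push Not at h
    have hs : κ = Finsupp.single j₀ (κ j₀) := by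
      ext j
      by_cases hj : j = j₀
      · subst hj; simp
      · rw [h j hj, Finsupp.single_eq_of_ne hj]
    have h0 : κ j₀ = 0 := by
      by_contra hne
      exact hcon _ hne (hs ▸ hκ)
    rw [h0]
    simpa using Finset.sum_nonneg hnn

lemma fw_conv_notConst {n : ℕ} (f : MvPolynomial (Fin n) ℝ) (hf : Convenient f)
    (J : Set (Fin n)) (j₀ : Fin n) (hj₀ : j₀ ∈ J) : NotConstOn f J := by
  obtain ⟨a, ha, hmem⟩ := fw_conv_supp f hf j₀
  by_contra hcc
  unfold NotConstOn at hcc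
  push Not at hcc
  let z : Fin n → Polynomial ℝ := fun j => if j = j₀ then Polynomial.X else 0
  let P : Polynomial ℝ := aeval z f
  have hPe : ∀ s : ℝ, P.eval s = eval (fun j => if j = j₀ then s else 0) f := by
    intro s
    have h := MvPolynomial.map_aeval z (Polynomial.evalRingHom s) f
    simp only [Polynomial.coe_evalRingHom] at h
    rw [show P.eval s = _ from h, MvPolynomial.coe_eval₂Hom, MvPolynomial.eval, MvPolynomial.coe_eval₂Hom]
    congr 1
    · ext r; simp
    · ext j; simp only [z]; split_ifs <;> simp
  have hc : P = Polynomial.C (P.eval 0) := by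
    apply Polynomial.funext
    intro s
    rw [Polynomial.eval_C, hPe, hPe]
    apply hcc
    · intro j hj
      have : j ≠ j₀ := fun h => hj (h ▸ hj₀)
      simp [this]
    · intro j hj; simp
  have h1 : P.coeff a = f.coeff (Finsupp.single j₀ a) := by
    simp only [P]
    rw [MvPolynomial.aeval_def, MvPolynomial.eval₂_eq', Polynomial.finsetSum_coeff]
    simp only [Polynomial.algebraMap_eq, Polynomial.coeff_C_mul]
    rw [Finset.sum_eq_single (Finsupp.single j₀ a)]
    · rw [Finset.prod_eq_single j₀]
      · simp [z]
      · intro j _ hj; rw [Finsupp.single_eq_of_ne hj, pow_zero]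
      · simp
    · intro κ _ hne
      by_cases h : ∃ j, j ≠ j₀ ∧ κ j ≠ 0
      · obtain ⟨j, hj, hk⟩ := h
        rw [Finset.prod_eq_zero (Finset.mem_univ j)]
        · simp
        · simp [z, hj, hk]
      · push Not at h
        rw [Finset.prod_eq_single j₀]
        · simp only [z, if_true, Polynomial.coeff_X_pow]
          rw [if_neg, mul_zero]
          rintro rfl
          apply hne
          ext j
          by_cases hj : j = j₀
          · subst hj; simp
          · rw [h j hj, Finsupp.single_eq_of_ne hj]
        · intro j _ hj; rw [h j hj, pow_zero]
        · simp
    · intro h; exact absurd hmem h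
  rw [hc, Polynomial.coeff_C, if_neg ha] at h1
  exact (MvPolynomial.mem_support_iff.1 hmem) h1.symm

open Topology in
lemma fw_core {n p : ℕ} (f : Fin (p + 1) → MvPolynomial (Fin n) ℝ)
    (hnz : ∀ i, (f i).support.Nonempty)
    (S : Set (Fin n → ℝ))
    (hS : S = {x | ∀ i, i ≠ 0 → eval x (f i) ≤ 0})
    (hMF : MFinfty f)
    (hconv : Convenient (f 0)) (U : Ultrafilter ℕ) (hU : (U : Filter ℕ) ≤ atTop)
    (x : ℕ → Fin n → ℝ)
    (hx : ∀ᶠ k in (U : Filter ℕ),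
        x k ∈ S ∧ ∀ y ∈ S, ‖y‖ ≤ ‖x k‖ → eval (x k) (f 0) ≤ eval y (f 0))
    (C : ℝ) (hC : ∀ᶠ k in (U : Filter ℕ), |eval (x k) (f 0)| ≤ C)
    (hinf : Tendsto (fun k => ‖x k‖) U atTop) : False := by
  -- signs
  have hsg : ∀ j, ∃ s : ℝ, ∀ᶠ k in (U : Filter ℕ), SignType.sign (x k j) = s := by
    intro j
    by_cases h1 : ∀ᶠ k in (U : Filter ℕ), 0 < x k j
    · exact ⟨1, h1.mono fun k hk => by simp [sign_pos hk]⟩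
    by_cases h2 : ∀ᶠ k in (U : Filter ℕ), x k j < 0
    · exact ⟨-1, h2.mono fun k hk => by simp [sign_neg hk]⟩
    refine ⟨0, ?_⟩
    filter_upwards [Ultrafilter.eventually_not.2 h1, Ultrafilter.eventually_not.2 h2] with k a b
    have : x k j = 0 := le_antisymm (not_lt.1 a) (not_lt.1 b)
    simp [this]
  choose σ hσ using hsg
  have hσ' : ∀ᶠ k in (U : Filter ℕ), ∀ j, (SignType.sign (x k j) : ℝ) = σ j :=
    Filter.eventually_all.2 hσ
  let J : Set (Fin n) := {j | σ j ≠ 0}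
  have hσJ : ∀ j ∉ J, σ j = 0 := fun j hj => by simpa [J] using hj
  let B : ℕ → ℝ := fun k => k * (1 + ∑ j, |Real.log (|x k j|)|)
  let u : ℕ → Fin n → ℝ := fun k j => if j ∈ J then Real.log |x k j| else - B k
  have hxu : ∀ᶠ k in (U : Filter ℕ), x k = fun j => σ j * Real.exp (u k j) := by
    filter_upwards [hσ'] with k hk
    ext j
    by_cases hj : j ∈ J
    · have hne : x k j ≠ 0 := by
        intro h0
        apply hj
        rw [← hk j, h0]; simp
      simp only [u, if_pos hj]
      rw [Real.exp_log (abs_pos.2 hne), ← hk j, sign_mul_abs]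
    · have h0 := hσJ j hj
      have := hk j
      rw [h0] at this
      rw [h0, zero_mul]
      by_contra hne
      rcases lt_or_gt_of_ne hne with h | h
      · simp [sign_neg h] at this
      · simp [sign_pos h] at this
  have hσabs : ∀ j ∈ J, |σ j| = 1 := by
    intro j hj
    obtain ⟨k, hk⟩ := hσ'.exists
    have hne : x k j ≠ 0 := by
      intro h0
      apply hj
      rw [← hk j, h0]; simp
    rw [← hk j]
    rcases lt_or_gt_of_ne hne with h | h
    · simp [sign_neg h]
    · simp [sign_pos h]
  -- the index of maximal modulus
  have hj0 : ∃ j₀, ∀ᶠ k in (U : Filter ℕ), ‖x k‖ = |x k j₀| := by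
    have h1 : ∀ᶠ k in (U : Filter ℕ), ∃ j, ‖x k‖ = |x k j| := by
      filter_upwards [hinf.eventually_gt_atTop 0] with k hk
      by_contra hcon
      push Not at hcon
      have : ‖x k‖ < ‖x k‖ := (pi_norm_lt_iff hk).2 fun j =>
        lt_of_le_of_ne (norm_le_pi_norm _ j) (Ne.symm (hcon j))
      exact lt_irrefl _ this
    by_contra hcon
    push Not at hcon
    have h2 : ∀ᶠ k in (U : Filter ℕ), ∀ j, ¬ ‖x k‖ = |x k j| :=
      Filter.eventually_all.2 fun j => hcon j
    obtain ⟨k, ⟨j, hj⟩, hk⟩ := (h1.and h2).exists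
    exact hk j hj
  obtain ⟨j₀, hj₀⟩ := hj0
  have hj₀J : j₀ ∈ J := by
    intro h0
    obtain ⟨k, ⟨hk1, hk2⟩, hk3⟩ := ((hj₀.and hxu).and (hinf.eventually_gt_atTop 0)).exists
    rw [hk1, hk2] at hk3
    simp [h0] at hk3
  have hu0 : Tendsto (fun k => u k j₀) U atTop := by
    have : Tendsto (fun k => Real.log ‖x k‖) U atTop := Real.tendsto_log_atTop.comp hinf
    refine this.congr' ?_
    filter_upwards [hj₀] with k hk
    simp only [u, if_pos hj₀J, hk]
  -- scaling data
  let E : Fin n → Fin n → ℝ := fun j => Pi.single j 1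
  let D : Finset (Fin n → ℝ) :=
    (Finset.univ.biUnion fun i => ((f i).support ×ˢ (f i).support).image
        fun z => expVec z.1 - expVec z.2) ∪
    (Finset.univ.biUnion fun i => (f i).support.image expVec) ∪
    (Finset.univ.image fun j => E j - E j₀) ∪ {E j₀}
  obtain ⟨q, w, hqw⟩ := fw_scale U D u
  have hqw : ∀ δ ∈ D, FWTri U u q w δ := hqw
  have hT1 : ∀ i, ∀ κ ∈ (f i).support, ∀ κ' ∈ (f i).support,
      FWTri U u q w (expVec κ - expVec κ') := by
    intro i κ hκ κ' hκ'
    apply hqw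
    simp only [D, Finset.mem_union, Finset.mem_biUnion, Finset.mem_image]
    exact Or.inl (Or.inl (Or.inl ⟨i, Finset.mem_univ _, (κ, κ'), Finset.mem_product.2 ⟨hκ, hκ'⟩, rfl⟩))
  have hT2 : ∀ i, ∀ κ ∈ (f i).support, FWTri U u q w (expVec κ) := by
    intro i κ hκ
    apply hqw
    simp only [D, Finset.mem_union, Finset.mem_biUnion, Finset.mem_image]
    exact Or.inl (Or.inl (Or.inr ⟨i, Finset.mem_univ _, κ, hκ, rfl⟩))
  have hT3 : ∀ j, FWTri U u q w (E j - E j₀) := by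
    intro j
    apply hqw
    simp only [D, Finset.mem_union, Finset.mem_image]
    exact Or.inl (Or.inr ⟨j, Finset.mem_univ _, rfl⟩)
  have hT4 : FWTri U u q w (E j₀) := by
    apply hqw
    simp [D]
  have hEd : ∀ j (z : Fin n → ℝ), E j ⬝ᵥ z = z j := fun j z => by simp [E]
  have hq0 : q j₀ < 0 := by
    have := hT4.neg_of (by simpa only [hEd] using hu0)
    rwa [hEd] at this
  -- minimal exponents
  have hmin : ∀ i, ∃ κ₀ ∈ (f i).support, ∀ κ ∈ (f i).support, expVec κ₀ ⬝ᵥ q ≤ expVec κ ⬝ᵥ q :=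
    fun i => Finset.exists_min_image _ (fun κ => expVec κ ⬝ᵥ q) (hnz i)
  choose m hm hmmin using hmin
  have hlim := fun i c => fw_lim U u q w (f i) (m i) (hm i) (hmmin i)
    (fun κ hκ => hT1 i κ hκ _ (hm i)) c
  have hDneg : NewtonD (f 0) q < 0 := by
    obtain ⟨c, hc, hmem⟩ := hconv j₀
    have := fw_hull (f 0) q _ (hmmin 0) _ hmem
    rw [fw_D (f 0) q (m 0) (hm 0) (hmmin 0)]
    rw [smul_dotProduct] at this
    have h2 : (Pi.single j₀ 1 : Fin n → ℝ) ⬝ᵥ q = q j₀ := hEd j₀ q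
    rw [h2, smul_eq_mul] at this
    nlinarith
  -- the face condition
  have hdom : ∀ κ κ' : Fin n →₀ ℕ, expVec κ ∉ RJ J → expVec κ' ∈ RJ J →
      Tendsto (fun k => (expVec κ - expVec κ') ⬝ᵥ u k) U atBot := by
    intro κ κ' hκ hκ'
    simp only [RJ, Set.mem_ofPred_eq, not_forall] at hκ
    obtain ⟨j₁, hj₁, hne⟩ := hκ
    let M : ℝ := ∑ j, |expVec κ j - expVec κ' j|
    have hcast : Tendsto (fun k : ℕ => -(k : ℝ)) U atBot :=
      tendsto_neg_atTop_atBot.comp (tendsto_natCast_atTop_atTop.mono_left hU)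
    refine tendsto_atBot_mono' _ ?_ hcast
    have hge : ∀ᶠ k : ℕ in (U : Filter ℕ), M ≤ k :=
      (tendsto_natCast_atTop_atTop.mono_left hU).eventually_ge_atTop M
    filter_upwards [hge] with k hk
    set s : ℝ := ∑ j, |Real.log (|x k j|)| with hs
    have hs0 : 0 ≤ s := Finset.sum_nonneg fun j _ => abs_nonneg _
    have hB0 : 0 ≤ B k := by positivity
    have hterm : ∀ j, (expVec κ - expVec κ') j * u k j ≤
        |expVec κ j - expVec κ' j| * s + (if j = j₁ then - B k else 0) := by
      intro j
      have hnn : 0 ≤ |expVec κ j - expVec κ' j| * s := mul_nonneg (abs_nonneg _) hs0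
      by_cases hj : j ∈ J
      · have hne' : j ≠ j₁ := fun h => hj₁ (h ▸ hj)
        simp only [u, if_pos hj, if_neg hne', add_zero, Pi.sub_apply]
        refine (le_abs_self _).trans ?_
        rw [abs_mul]
        refine mul_le_mul_of_nonneg_left ?_ (abs_nonneg _)
        exact Finset.single_le_sum (f := fun j => |Real.log (|x k j|)|)
          (fun j _ => abs_nonneg _) (Finset.mem_univ j)
      · have h0 : expVec κ' j = 0 := hκ' j hj
        simp only [u, if_neg hj, Pi.sub_apply]
        split_ifs with hjj
        · subst hjj
          have h1 : (1 : ℝ) ≤ expVec κ j := by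
            simp only [expVec] at hne ⊢
            have : κ j ≠ 0 := by exact_mod_cast hne
            exact_mod_cast Nat.one_le_iff_ne_zero.2 this
          rw [h0] at hnn ⊢
          nlinarith
        · have h1 : (0 : ℝ) ≤ expVec κ j := by simp [expVec]
          rw [h0] at hnn ⊢
          nlinarith
    calc (expVec κ - expVec κ') ⬝ᵥ u k
        ≤ ∑ j, (|expVec κ j - expVec κ' j| * s + (if j = j₁ then - B k else 0)) :=
          Finset.sum_le_sum fun j _ => hterm j
      _ = M * s - B k := by
          rw [Finset.sum_add_distrib, ← Finset.sum_mul]; simp [M]; ring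
      _ ≤ -(k : ℝ) := by
          have : B k = k * (1 + s) := rfl
          rw [this]; nlinarith
  have hface : ∀ i, NotConstOn (f i) J → NewtonFace (f i) q ⊆ RJ J := by
    intro i hi
    obtain ⟨κ', hκ', hJ'⟩ := fw_const _ _ hi
    refine fw_face_sub (f i) q (m i) (hm i) (hmmin i) J fun κ hκ hnJ => ?_
    have := (hT1 i κ hκ κ' hκ').pos_of (hdom κ κ' hnJ hJ')
    rw [sub_dotProduct] at this
    linarith [hmmin i κ' hκ']
  let X : Fin n → ℝ := fun j => σ j * Real.exp (w j)
  have hX0 : ∀ j, X j = 0 ↔ j ∉ J := by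
    intro j
    simp [X, J]
  let N : Fin (p + 1) → ℕ → ℝ := fun i k => Real.exp (-(expVec (m i) ⬝ᵥ (u k - w)))
  have hN : ∀ i k, 0 < N i k := fun i k => Real.exp_pos _
  have hval : ∀ i, Tendsto (fun k => eval (x k) (f i) * N i k) U
      (𝓝 (eval X (facePoly (f i) (NewtonFace (f i) q)))) := by
    intro i
    have := hlim i (fun κ => (f i).coeff κ * ∏ j, σ j ^ κ j)
    rw [fw_face_eval]
    refine this.congr' ?_
    filter_upwards [hxu] with k hk
    rw [hk, fw_eval]
  have hXle : ∀ i, i ≠ 0 → eval X (facePoly (f i) (NewtonFace (f i) q)) ≤ 0 := by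
    intro i hi
    refine le_of_tendsto (hval i) ?_
    filter_upwards [hx] with k hk
    have h1 := hk.1
    rw [hS] at h1
    exact mul_nonpos_of_nonpos_of_nonneg (h1 i hi) (hN i k).le
  have hX00 : eval X (facePoly (f 0) (NewtonFace (f 0) q)) = 0 := by
    refine tendsto_nhds_unique (hval 0) ?_
    have hN0 : Tendsto (N 0) U (𝓝 0) := by
      have h1 := (hT2 0 (m 0) (hm 0)).neg (by
        rw [← fw_D (f 0) q (m 0) (hm 0) (hmmin 0)]; exact hDneg)
      have h2 : Tendsto (fun k => expVec (m 0) ⬝ᵥ (u k - w)) U atTop := by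
        simp only [dotProduct_sub]
        exact tendsto_atTop_add_const_right _ _ h1
      exact Real.tendsto_exp_atBot.comp (tendsto_neg_atTop_atBot.comp h2)
    refine squeeze_zero_norm' (a := fun k => C * N 0 k) ?_ (by simpa using hN0.const_mul C)
    filter_upwards [hC] with k hk
    rw [norm_mul, Real.norm_eq_abs, Real.norm_eq_abs, abs_of_pos (hN 0 k)]
    exact mul_le_mul_of_nonneg_right hk (hN 0 k).le
  obtain ⟨v, -, hv⟩ := hMF J ⟨j₀, hj₀J⟩ q X hDneg hface hX0 hXle
  -- the direction
  let t : ℝ := (1 + ∑ j, |v j / X j|) / (- q j₀)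
  let g : Fin n → ℝ := fun j => v j / X j + t * q j
  have hgneg : ∀ j, q j = q j₀ → g j < 0 := by
    intro j hj
    have h1 : t * q j = -(1 + ∑ j, |v j / X j|) := by
      simp only [t]; rw [hj, div_neg, neg_mul, div_mul_cancel₀ _ hq0.ne]
    have h2 : v j / X j ≤ ∑ j, |v j / X j| := (le_abs_self _).trans
      (Finset.single_le_sum (f := fun j => |v j / X j|) (fun j _ => abs_nonneg _) (Finset.mem_univ j))
    simp only [g]; rw [h1]; linarith
  have hder : ∀ i, Tendsto (fun k => (∑ κ ∈ (f i).support,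
      ((f i).coeff κ * ∏ j, σ j ^ κ j) * Real.exp (expVec κ ⬝ᵥ u k) * (expVec κ ⬝ᵥ g)) * N i k) U
      (𝓝 (∑ κ ∈ (f i).support.filter (fun κ => expVec κ ∈ NewtonFace (f i) q),
        ((f i).coeff κ * ∏ j, σ j ^ κ j) * Real.exp (expVec κ ⬝ᵥ w) * (expVec κ ⬝ᵥ g))) := by
    intro i
    have := hlim i (fun κ => (f i).coeff κ * (∏ j, σ j ^ κ j) * (expVec κ ⬝ᵥ g))
    simpa only [mul_right_comm _ (expVec _ ⬝ᵥ g)] using this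
  have hdneg : ∀ i, NotConstOn (f i) J →
      eval X (facePoly (f i) (NewtonFace (f i) q)) = 0 →
      ∑ κ ∈ (f i).support.filter (fun κ => expVec κ ∈ NewtonFace (f i) q),
        ((f i).coeff κ * ∏ j, σ j ^ κ j) * Real.exp (expVec κ ⬝ᵥ w) * (expVec κ ⬝ᵥ g) < 0 := by
    intro i hi h0
    refine lt_of_eq_of_lt ?_ (hv i hi h0)
    have e1 : ∀ κ : Fin n →₀ ℕ, expVec κ ⬝ᵥ g =
        ∑ j, (κ j : ℝ) * (v j / X j) + t * (expVec κ ⬝ᵥ q) := by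
      intro κ
      simp only [dotProduct, g, mul_add, Finset.sum_add_distrib, Finset.mul_sum, expVec]
      congr 1
      exact Finset.sum_congr rfl fun j _ => by ring
    simp only [e1, mul_add, Finset.sum_add_distrib]
    have z : ∑ κ ∈ (f i).support.filter (fun κ => expVec κ ∈ NewtonFace (f i) q),
        ((f i).coeff κ * ∏ j, σ j ^ κ j) * Real.exp (expVec κ ⬝ᵥ w) * (t * (expVec κ ⬝ᵥ q)) = 0 := by
      rw [fw_face_eval] at h0
      rw [← mul_zero (t * (expVec (m i) ⬝ᵥ q)), ← h0, Finset.mul_sum]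
      refine Finset.sum_congr rfl fun κ hκ => ?_
      rw [Finset.mem_filter] at hκ
      rw [(fw_mem_face (f i) q (m i) κ (hm i) hκ.1 (hmmin i)).1 hκ.2]
      ring
    rw [z, add_zero]
    simp only [Finset.mul_sum]
    rw [Finset.sum_comm]
    refine Finset.sum_congr rfl fun j _ => ?_
    by_cases hj : j ∈ J
    · have hXj : X j ≠ 0 := fun h => (hX0 j).1 h hj
      have hp := fw_face_pderiv (f i) (NewtonFace (f i) q) σ w j
      have hp' : eval X (pderiv j (facePoly (f i) (NewtonFace (f i) q))) * v j =
          (X j * eval X (pderiv j (facePoly (f i) (NewtonFace (f i) q)))) * (v j / X j) := by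
        field_simp
      rw [hp']
      rw [show X j * eval X (pderiv j (facePoly (f i) (NewtonFace (f i) q))) = _ from hp]
      rw [Finset.sum_mul]
      exact Finset.sum_congr rfl fun κ _ => by ring
    · have hXj : X j = 0 := (hX0 j).2 hj
      have hz : pderiv j (facePoly (f i) (NewtonFace (f i) q)) = 0 := by
        unfold facePoly
        rw [map_sum]
        refine Finset.sum_eq_zero fun κ hκ => ?_
        have h1 := hface i hi (Finset.mem_filter.1 hκ).2 j hj
        have h2 : κ j = 0 := by simpa [expVec] using h1
        rw [pderiv_monomial, h2]; simp
      rw [hz, hXj]; simp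
  -- choose k
  have hcon0 : NotConstOn (f 0) J := fw_conv_notConst (f 0) hconv J j₀ hj₀J
  have hgood : ∀ᶠ k in (U : Filter ℕ), ∀ i, NotConstOn (f i) J →
      (i ≠ 0 ∧ eval (x k) (f i) < 0) ∨ ∑ κ ∈ (f i).support,
      ((f i).coeff κ * ∏ j, σ j ^ κ j) * Real.exp (expVec κ ⬝ᵥ u k) * (expVec κ ⬝ᵥ g) < 0 := by
    rw [Filter.eventually_all]
    intro i
    by_cases hi : NotConstOn (f i) J
    swap
    · exact Eventually.of_forall fun _ h => absurd h hi
    by_cases h0 : eval X (facePoly (f i) (NewtonFace (f i) q)) = 0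
    · filter_upwards [(hder i).eventually_lt_const (hdneg i hi h0)] with k hk _
      right
      exact neg_of_mul_neg_left hk (hN i k).le
    · have hi0 : i ≠ 0 := by rintro rfl; exact h0 hX00
      filter_upwards [(hval i).eventually_lt_const (lt_of_le_of_ne (hXle i hi0) h0)] with k hk _
      left
      exact ⟨hi0, neg_of_mul_neg_left hk (hN i k).le⟩
  have hnorm : ∀ᶠ k in (U : Filter ℕ), ∀ j, j ∈ J → g j < 0 ∨ |x k j| < ‖x k‖ := by
    rw [Filter.eventually_all]
    intro j
    by_cases hj : j ∈ J
    swap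
    · exact Eventually.of_forall fun _ h => absurd h hj
    by_cases hqj : q j = q j₀
    · exact Eventually.of_forall fun _ _ => Or.inl (hgneg j hqj)
    · have hle : ∀ᶠ k in (U : Filter ℕ), u k j ≤ u k j₀ := by
        filter_upwards [hj₀, hxu] with k hk hk2
        have h1 : |x k j| ≤ |x k j₀| := by
          rw [← hk]; exact norm_le_pi_norm (x k) j
        rw [hk2] at h1
        simp only [abs_mul, hσabs j hj, hσabs j₀ hj₀J, one_mul, Real.abs_exp] at h1
        exact Real.exp_le_exp.1 h1
      have hlt : 0 < (E j - E j₀) ⬝ᵥ q := by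
        rcases lt_trichotomy ((E j - E j₀) ⬝ᵥ q) 0 with h | h | h
        · have := (hT3 j).neg h
          obtain ⟨k, h1, h2⟩ := ((this.eventually_gt_atTop 0).and hle).exists
          rw [sub_dotProduct, hEd, hEd] at h1
          linarith
        · rw [sub_dotProduct, hEd, hEd] at h
          exact absurd (by linarith) hqj
        · exact h
      have := (hT3 j).pos hlt
      filter_upwards [this.eventually_lt_atBot 0, hj₀, hxu] with k hk hk1 hk2 _
      right
      rw [sub_dotProduct, hEd, hEd] at hk
      rw [hk1, hk2]
      simp only [abs_mul, hσabs j hj, hσabs j₀ hj₀J, one_mul, Real.abs_exp]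
      exact Real.exp_lt_exp.2 (by linarith)
  obtain ⟨k, ⟨⟨⟨hxS, hxmin⟩, hxk⟩, hgd⟩, hnm⟩ := (((hx.and hxu).and hgood).and hnorm).exists
  -- perturb
  let y : ℝ → Fin n → ℝ := fun ε j => σ j * Real.exp (u k j + ε * g j)
  have hy0 : y 0 = x k := by rw [hxk]; simp [y]
  have hyc : Continuous y := by
    apply continuous_pi; intro j; simp only [y]; fun_prop
  have hyt : Tendsto y (𝓝[>] 0) (𝓝 (x k)) := by
    rw [← hy0]; exact (hyc.tendsto 0).mono_left nhdsWithin_le_nhds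
  have hyJ : ∀ ε, y ε ∈ RJ J := fun ε j hj => by simp [y, hσJ j hj]
  have hyeval : ∀ ε i, eval (y ε) (f i) = ∑ κ ∈ (f i).support,
      ((f i).coeff κ * ∏ j, σ j ^ κ j) * Real.exp (expVec κ ⬝ᵥ u k + ε * (expVec κ ⬝ᵥ g)) := by
    intro ε i
    have := fw_eval (f i) σ (fun j => u k j + ε * g j)
    rw [show eval (y ε) (f i) = _ from this]
    refine Finset.sum_congr rfl fun κ _ => ?_
    have : (fun j => u k j + ε * g j) = u k + ε • g := rfl
    rw [this, dotProduct_add, dotProduct_smul, smul_eq_mul]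
  have hdesc : ∀ i, ∑ κ ∈ (f i).support,
      ((f i).coeff κ * ∏ j, σ j ^ κ j) * Real.exp (expVec κ ⬝ᵥ u k) * (expVec κ ⬝ᵥ g) < 0 →
      ∀ᶠ ε in 𝓝[>] (0 : ℝ), eval (y ε) (f i) < eval (x k) (f i) := by
    intro i hi
    have := fw_descent _ _ _ _ hi
    filter_upwards [this] with ε hε
    rw [hyeval, ← hy0, hyeval]
    simpa using hε
  have hyS : ∀ᶠ ε in 𝓝[>] (0 : ℝ), y ε ∈ S := by
    rw [hS] at hxS ⊢
    simp only [Set.mem_ofPred_eq]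
    rw [Filter.eventually_all]
    intro i
    by_cases hi0 : i = 0
    · exact Eventually.of_forall fun _ h => absurd hi0 h
    by_cases hi : NotConstOn (f i) J
    · rcases hgd i hi with h | h
      · have hc := ((MvPolynomial.continuous_eval (f i)).tendsto (x k)).comp hyt
        filter_upwards [hc.eventually_lt_const h.2] with ε hε _ using hε.le
      · filter_upwards [hdesc i h] with ε hε _
        exact hε.le.trans (hxS i hi0)
    · unfold NotConstOn at hi
      push Not at hi
      refine Eventually.of_forall fun ε _ => ?_
      rw [hi (y ε) (hyJ ε) (x k) (hy0 ▸ hyJ 0)]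
      exact hxS i hi0
  have hyn : ∀ᶠ ε in 𝓝[>] (0 : ℝ), ‖y ε‖ ≤ ‖x k‖ := by
    have : ∀ᶠ ε in 𝓝[>] (0 : ℝ), ∀ j, |y ε j| ≤ ‖x k‖ := by
      rw [Filter.eventually_all]
      intro j
      by_cases hj : j ∈ J
      swap
      · refine Eventually.of_forall fun ε => ?_
        rw [hyJ ε j hj]; simp
      rcases hnm j hj with h | h
      · filter_upwards [self_mem_nhdsWithin] with ε hε
        have hε : (0 : ℝ) < ε := hε
        have h1 : |y ε j| ≤ |y 0 j| := by
          simp only [y, abs_mul, Real.abs_exp]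
          refine mul_le_mul_of_nonneg_left (Real.exp_le_exp.2 ?_) (abs_nonneg _)
          nlinarith
        rw [hy0] at h1
        exact h1.trans (norm_le_pi_norm (x k) j)
      · have h1 := ((continuous_abs.comp (continuous_apply j)).tendsto (x k)).comp hyt
        filter_upwards [h1.eventually_lt_const h] with ε hε using hε.le
    filter_upwards [this] with ε hε
    exact (pi_norm_le_iff_of_nonneg (norm_nonneg _)).2 hε
  have h0d : ∑ κ ∈ (f 0).support,
      ((f 0).coeff κ * ∏ j, σ j ^ κ j) * Real.exp (expVec κ ⬝ᵥ u k) * (expVec κ ⬝ᵥ g) < 0 := by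
    rcases hgd 0 hcon0 with h | h
    · exact absurd rfl h.1
    · exact h
  obtain ⟨ε, ⟨h1, h2⟩, h3⟩ := ((hyS.and hyn).and (hdesc 0 h0d)).exists
  linarith [hxmin _ h1 h2]

/-- **Theorem 3.2 (A Frank–Wolfe type theorem).** -/
theorem frank_wolfe_type {n p : ℕ} (f : Fin (p + 1) → MvPolynomial (Fin n) ℝ)
    (hnc : ∀ i, ∃ x y : Fin n → ℝ, eval x (f i) ≠ eval y (f i))
    (S : Set (Fin n → ℝ))
    (hS : S = {x | ∀ i, i ≠ 0 → eval x (f i) ≤ 0})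
    (hSne : S.Nonempty)
    (hbdd : BddBelow ((fun x => eval x (f 0)) '' S))
    (hMF : MFinfty f)
    (hconv : Convenient (f 0)) :
    ∃ xs ∈ S, eval xs (f 0) = sInf ((fun x => eval x (f 0)) '' S) := by
  by_cases hno : ∃ xs ∈ S, ∀ y ∈ S, eval xs (f 0) ≤ eval y (f 0)
  · obtain ⟨xs, hxs, hmin⟩ := hno
    refine ⟨xs, hxs, Eq.symm (IsLeast.csInf_eq ⟨⟨xs, hxs, rfl⟩, ?_⟩)⟩
    rintro _ ⟨y, hy, rfl⟩
    exact hmin y hy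
  exfalso
  have hSc : IsClosed S := by
    rw [hS]
    simp only [Set.ofPred_forall]
    exact isClosed_iInter fun i => isClosed_iInter fun _ =>
      isClosed_le (MvPolynomial.continuous_eval (f i)) continuous_const
  have hnz : ∀ i, (f i).support.Nonempty := by
    intro i
    rw [Finset.nonempty_iff_ne_empty]
    intro h
    rw [MvPolynomial.support_eq_empty] at h
    obtain ⟨a, b, hab⟩ := hnc i
    rw [h] at hab
    simp at hab
  obtain ⟨x, hx, ⟨C, hC⟩, hinf⟩ := fw_seq (f 0) S hSc hSne hno
  obtain ⟨b, hb⟩ := hbdd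
  have hle : (hyperfilter ℕ : Filter ℕ) ≤ atTop := by
    rw [← Nat.cofinite_eq_atTop]; exact hyperfilter_le_cofinite
  refine fw_core f hnz S hS hMF hconv (hyperfilter ℕ) hle x hx (max C (-b)) ?_ hinf
  filter_upwards [hx, hC] with k h1 h2
  have h3 : b ≤ eval (x k) (f 0) := hb ⟨x k, h1.1, rfl⟩
  rw [abs_le]
  constructor
  · linarith [le_max_right C (-b)]
  · exact h2.trans (le_max_left _ _)
end
end

section
/- Let f₀ : ℝⁿ → ℝ be a nonconstant polynomial function that is bounded from below on ℝⁿ and nondegenerate at infinity, and set f* := inf_{x ∈ ℝⁿ} f₀(x). If f₀ does not attain its infimum f* on ℝⁿ, then there exist a point x* ∈ (ℝ∖{0})ⁿ (all coordinates nonzero) and a bad face Δ₀ of Γ(f₀) such that f* = f_{0,Δ₀}(x*) and ∇f_{0,Δ₀}(x*) = 0. -/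
open MvPolynomial Set Filter
open scoped Classical

noncomputable section

lemma newton_facts {n : ℕ} (f : MvPolynomial (Fin n) ℝ) (q : Fin n → ℝ) (κ0 : Fin n →₀ ℕ)
    (h0 : κ0 ∈ f.support)
    (h : ∀ κ ∈ f.support, q ⬝ᵥ expVec κ0 ≤ q ⬝ᵥ expVec κ) :
    NewtonD f q = q ⬝ᵥ expVec κ0 := by
  have hle : ∀ z ∈ NewtonPolyhedron f, q ⬝ᵥ expVec κ0 ≤ q ⬝ᵥ z := by
    have hc : Convex ℝ {z : Fin n → ℝ | q ⬝ᵥ expVec κ0 ≤ q ⬝ᵥ z} :=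
      convex_halfSpace_ge ⟨fun x y => dotProduct_add q x y, fun c x => dotProduct_smul c q x⟩ _
    intro z hz
    refine convexHull_min ?_ hc hz
    rintro _ ⟨κ, hκ, rfl⟩
    exact h κ hκ
  have hleast : IsLeast ((fun κ : Fin n → ℝ => ∑ j, q j * κ j) '' NewtonPolyhedron f)
      (q ⬝ᵥ expVec κ0) := by
    refine ⟨⟨expVec κ0, subset_convexHull ℝ _ ⟨κ0, h0, rfl⟩, rfl⟩, ?_⟩
    rintro _ ⟨z, hz, rfl⟩
    exact hle z hz
  exact hleast.csInf_eq

lemma eval_facePoly {n : ℕ} (f : MvPolynomial (Fin n) ℝ) (q : Fin n → ℝ) (x : Fin n → ℝ) :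
    eval x (facePoly f (NewtonFace f q)) =
      ∑ κ ∈ f.support.filter (fun κ => q ⬝ᵥ expVec κ = NewtonD f q),
        f.coeff κ * ∏ j, x j ^ κ j := by
  unfold facePoly
  rw [map_sum]
  have : f.support.filter (fun κ => expVec κ ∈ NewtonFace f q) =
      f.support.filter (fun κ => q ⬝ᵥ expVec κ = NewtonD f q) := by
    refine Finset.filter_congr fun κ hκ => ?_
    exact ⟨fun h => h.2, fun h => ⟨subset_convexHull ℝ _ ⟨κ, hκ, rfl⟩, h⟩⟩
  rw [this]
  refine Finset.sum_congr rfl fun κ _ => ?_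
  rw [eval_monomial, Finsupp.prod_fintype _ _ (by simp)]

lemma prod_scale {n : ℕ} (x z : Fin n → ℝ) (κ : Fin n →₀ ℕ) :
    ∏ j, (x j * Real.exp (z j)) ^ κ j = (∏ j, x j ^ κ j) * Real.exp (z ⬝ᵥ expVec κ) := by
  simp only [mul_pow, Finset.prod_mul_distrib, dotProduct, Real.exp_sum]
  congr 1
  refine Finset.prod_congr rfl fun j _ => ?_
  rw [← Real.exp_nat_mul, mul_comm]; rfl

/-- asymptotics along the monomial curve -/
lemma face_limit {n : ℕ} (f : MvPolynomial (Fin n) ℝ) (q x : Fin n → ℝ) (κ0 : Fin n →₀ ℕ)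
    (h0 : κ0 ∈ f.support)
    (h : ∀ κ ∈ f.support, q ⬝ᵥ expVec κ0 ≤ q ⬝ᵥ expVec κ) :
    Tendsto (fun s : ℝ => Real.exp (s * (q ⬝ᵥ expVec κ0)) *
      eval (fun j => x j * Real.exp ((-s • q) j)) f) atTop
      (nhds (eval x (facePoly f (NewtonFace f q)))) := by
  rw [eval_facePoly, newton_facts f q κ0 h0 h, Finset.sum_filter]
  simp only [eval_eq', prod_scale, Finset.mul_sum]
  refine tendsto_finsetSum _ fun κ hκ => ?_
  have e : ∀ s : ℝ, Real.exp (s * (q ⬝ᵥ expVec κ0)) *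
      (f.coeff κ * ((∏ j, x j ^ κ j) * Real.exp ((-s • q) ⬝ᵥ expVec κ))) =
      (f.coeff κ * ∏ j, x j ^ κ j) * Real.exp (s * (q ⬝ᵥ expVec κ0 - q ⬝ᵥ expVec κ)) := by
    intro s
    rw [mul_sub, sub_eq_add_neg, Real.exp_add, smul_dotProduct, smul_eq_mul, neg_mul]
    ring
  simp only [e]
  split_ifs with hk
  · simp [hk]
  · have hlt : q ⬝ᵥ expVec κ0 - q ⬝ᵥ expVec κ < 0 :=
      sub_neg.2 (lt_of_le_of_ne (h κ hκ) (Ne.symm hk))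
    have : Tendsto (fun s : ℝ => Real.exp (s * (q ⬝ᵥ expVec κ0 - q ⬝ᵥ expVec κ))) atTop
        (nhds 0) := Real.tendsto_exp_atBot.comp (tendsto_id.atTop_mul_const_of_neg hlt)
    simpa using this.const_mul (f.coeff κ * ∏ j, x j ^ κ j)

lemma hasDerivAt_eval_update {n : ℕ} (p : MvPolynomial (Fin n) ℝ) (x : Fin n → ℝ) (j : Fin n) :
    HasDerivAt (fun t : ℝ => eval (Function.update x j t) p) (eval x (pderiv j p)) (x j) := by
  induction p using MvPolynomial.induction_on with
  | C a => simpa using hasDerivAt_const _ _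
  | add p q hp hq => simpa using hp.fun_add hq
  | mul_X p i hp =>
    have hX : HasDerivAt (fun t : ℝ => Function.update x j t i) (if i = j then 1 else 0) (x j) := by
      by_cases hij : i = j
      · subst hij; simpa using hasDerivAt_id' _
      · simpa [hij] using hasDerivAt_const _ _
    have := hp.fun_mul hX
    simp only [map_mul, eval_X]
    refine this.congr_deriv ?_
    by_cases hij : i = j
    · subst hij; simp; ring
    · simp [hij, pderiv_X_of_ne hij]; ring

lemma crit_of_min {n : ℕ} (p : MvPolynomial (Fin n) ℝ) (x : Fin n → ℝ) (hx : ∀ j, x j ≠ 0)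
    (hmin : ∀ y : Fin n → ℝ, (∀ j, y j ≠ 0) → eval x p ≤ eval y p) (j : Fin n) :
    eval x (pderiv j p) = 0 := by
  refine IsLocalMin.hasDerivAt_eq_zero ?_ (hasDerivAt_eval_update p x j)
  filter_upwards [isOpen_ne.mem_nhds (hx j)] with t ht
  rw [Function.update_eq_self]
  refine hmin _ fun i => ?_
  by_cases hij : i = j
  · subst hij; simpa using ht
  · simpa [hij] using hx i

lemma ultra_trichotomy {α : Type*} (U : Ultrafilter α) (g : α → ℝ) :
    Tendsto g U atTop ∨ Tendsto g U atBot ∨ ∃ c, Tendsto g U (nhds c) := by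
  by_cases hb : ∃ C : ℝ, ∀ᶠ a in (U : Filter α), g a ∈ Icc (-C) C
  · obtain ⟨C, hC⟩ := hb
    right; right
    obtain ⟨c, -, hc⟩ := (isCompact_Icc (a := -C) (b := C)).ultrafilter_le_nhds (U.map g)
      (by rw [Ultrafilter.coe_map]; exact le_principal_iff.2 hC)
    exact ⟨c, hc⟩
  · have hb' : ∀ C : ℝ, ∀ᶠ a in (U : Filter α), g a ∉ Icc (-C) C := fun C =>
      Ultrafilter.eventually_not.2 fun h => hb ⟨C, h⟩
    rcases Ultrafilter.eventually_or.1 (Eventually.of_forall (f := (U : Filter α)) fun a => le_total 0 (g a)) with h | h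
    · left
      refine tendsto_atTop.2 fun b => ?_
      filter_upwards [h, hb' |b|] with a h1 h2
      by_contra h3
      exact h2 ⟨by linarith [abs_nonneg b], by linarith [le_abs_self b]⟩
    · right; left
      refine tendsto_atBot.2 fun b => ?_
      filter_upwards [h, hb' |b|] with a h1 h2
      by_contra h3
      exact h2 ⟨by linarith [neg_abs_le b], by linarith [abs_nonneg b]⟩

/-- Linear algebra: separate the divergent and the convergent part. -/
lemma exists_direction {α : Type*} {n : ℕ} (U : Filter α) [U.NeBot] (y : α → Fin n → ℝ)
    (F : Finset (Fin n → ℝ)) :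
    ∃ v w : Fin n → ℝ, ∀ a ∈ F,
      (∀ c, Tendsto (fun t => y t ⬝ᵥ a) U (nhds c) → v ⬝ᵥ a = 0 ∧ w ⬝ᵥ a = c) ∧
      (Tendsto (fun t => y t ⬝ᵥ a) U atTop → 0 < v ⬝ᵥ a) ∧
      (Tendsto (fun t => y t ⬝ᵥ a) U atBot → v ⬝ᵥ a < 0) := by
  let F0 : Finset (Fin n → ℝ) := F.filter fun a => ∃ c, Tendsto (fun t => y t ⬝ᵥ a) U (nhds c)
  have hF0 : ∀ a : F0, ∃ c, Tendsto (fun t => y t ⬝ᵥ a.1) U (nhds c) := fun a =>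
    (Finset.mem_filter.1 a.2).2
  choose c hc using hF0
  let A : (Fin n → ℝ) →ₗ[ℝ] (F0 → ℝ) :=
    { toFun := fun z a => z ⬝ᵥ a.1
      map_add' := fun x y => by ext a; exact add_dotProduct _ _ _
      map_smul' := fun r x => by ext a; exact smul_dotProduct _ _ _ }
  obtain ⟨g0, hg0⟩ := A.rangeRestrict.exists_rightInverse_of_surjective A.range_rangeRestrict
  obtain ⟨g, hg⟩ := g0.exists_extend
  have hAgA : ∀ z, A (g (A z)) = A z := by
    intro z
    have h1 : g (A z) = g0 (A.rangeRestrict z) := by rw [← hg]; rfl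
    have h2 := congrArg Subtype.val (LinearMap.congr_fun hg0 (A.rangeRestrict z))
    rw [h1]; exact h2
  have hAy : Tendsto (fun t => A (y t)) U (nhds c) := tendsto_pi_nhds.2 fun a => hc a
  have hgc : Continuous g := g.continuous_of_finiteDimensional
  have hAc : Continuous A := A.continuous_of_finiteDimensional
  have hu : Tendsto (fun t => g (A (y t))) U (nhds (g c)) := (hgc.tendsto c).comp hAy
  have hAw : A (g c) = c := by
    refine tendsto_nhds_unique ((hAc.tendsto _).comp hu) ?_
    simpa [Function.comp_def, hAgA] using hAy
  have hua : ∀ a : Fin n → ℝ, Tendsto (fun t => g (A (y t)) ⬝ᵥ a) U (nhds (g c ⬝ᵥ a)) := fun a =>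
    ((Continuous.dotProduct continuous_id continuous_const).tendsto (g c)).comp hu
  have key : ∀ a ∈ F, ∀ᶠ t in U,
      (Tendsto (fun t => y t ⬝ᵥ a) U atTop → 0 < (y t - g (A (y t))) ⬝ᵥ a) ∧
      (Tendsto (fun t => y t ⬝ᵥ a) U atBot → (y t - g (A (y t))) ⬝ᵥ a < 0) := by
    intro a _
    refine Filter.Eventually.and ?_ ?_
    · by_cases h : Tendsto (fun t => y t ⬝ᵥ a) U atTop
      · have := h.atTop_add (hua a).neg
        filter_upwards [this.eventually_gt_atTop 0] with t ht _
        rw [sub_dotProduct]; linarith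
      · exact Eventually.of_forall fun t h' => absurd h' h
    · by_cases h : Tendsto (fun t => y t ⬝ᵥ a) U atBot
      · have := h.atBot_add (hua a).neg
        filter_upwards [this.eventually_lt_atBot 0] with t ht _
        rw [sub_dotProduct]; linarith
      · exact Eventually.of_forall fun t h' => absurd h' h
  obtain ⟨t, ht⟩ := ((Filter.eventually_all_finset F).2 key).exists
  refine ⟨y t - g (A (y t)), g c, fun a ha => ⟨fun c' hc' => ?_, (ht a ha).1, (ht a ha).2⟩⟩
  have ha0 : a ∈ F0 := Finset.mem_filter.2 ⟨ha, c', hc'⟩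
  constructor
  · have := congrFun (hAgA (y t)) ⟨a, ha0⟩
    change g (A (y t)) ⬝ᵥ a = y t ⬝ᵥ a at this
    rw [sub_dotProduct, this, sub_self]
  · have := congrFun hAw ⟨a, ha0⟩
    change g c ⬝ᵥ a = _ at this
    rw [this]
    exact tendsto_nhds_unique (hc ⟨a, ha0⟩) hc'

/-- If `0` is not in the affine span, some linear form is `1` on the set. -/
lemma exists_form_of_notMem {n : ℕ} (D : Set (Fin n → ℝ)) (hne : D.Nonempty)
    (h : (0 : Fin n → ℝ) ∉ affineSpan ℝ D) : ∃ p : Fin n → ℝ, ∀ z ∈ D, p ⬝ᵥ z = 1 := by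
  obtain ⟨a, ha⟩ := hne
  have haD : a ∉ vectorSpan ℝ D := by
    intro hv
    apply h
    have h1 : a ∈ affineSpan ℝ D := subset_affineSpan ℝ D ha
    have h2 := AffineSubspace.vadd_mem_of_mem_direction
      (by rw [direction_affineSpan]; exact neg_mem hv) h1
    simpa using h2
  obtain ⟨φ, hφ, hker⟩ := Submodule.exists_le_ker_of_notMem haD
  refine ⟨fun j => φ (Pi.single j 1) / φ a, fun z hz => ?_⟩
  have h1 : φ z = φ a := by
    have := hker (vsub_mem_vectorSpan ℝ hz ha)
    rw [LinearMap.mem_ker, vsub_eq_sub, map_sub] at this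
    linarith
  have h2 : φ z = ∑ j, z j * φ (Pi.single j 1) := by
    conv_lhs => rw [pi_eq_sum_univ' z]
    simp [map_sum]
  have : (fun j => φ (Pi.single j 1) / φ a) ⬝ᵥ z = φ z / φ a := by
    rw [h2, Finset.sum_div]
    refine Finset.sum_congr rfl fun j _ => by ring
  rw [this, h1, div_self hφ]

/-- Lower bound for the face polynomial. -/
lemma face_lower {n : ℕ} (f : MvPolynomial (Fin n) ℝ) (m : ℝ) (hm : ∀ x, m ≤ eval x f)
    (q x : Fin n → ℝ) (κ0 : Fin n →₀ ℕ) (h0 : κ0 ∈ f.support)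
    (h : ∀ κ ∈ f.support, q ⬝ᵥ expVec κ0 ≤ q ⬝ᵥ expVec κ) :
    (q ⬝ᵥ expVec κ0 = 0 → m ≤ eval x (facePoly f (NewtonFace f q))) ∧
    (q ⬝ᵥ expVec κ0 < 0 → 0 ≤ eval x (facePoly f (NewtonFace f q))) := by
  have hl := face_limit f q x κ0 h0 h
  constructor
  · intro hd
    refine ge_of_tendsto' hl fun s => ?_
    simpa [hd] using hm _
  · intro hd
    have h1 : Tendsto (fun s : ℝ => Real.exp (s * (q ⬝ᵥ expVec κ0)) * m) atTop (nhds (0 * m)) :=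
      (Real.tendsto_exp_atBot.comp (tendsto_id.atTop_mul_const_of_neg hd)).mul_const m
    rw [zero_mul] at h1
    exact le_of_tendsto_of_tendsto' h1 hl fun s =>
      mul_le_mul_of_nonneg_left (hm _) (Real.exp_pos _).le

lemma face_pos {n : ℕ} (f : MvPolynomial (Fin n) ℝ) (m : ℝ) (hm : ∀ x, m ≤ eval x f)
    (hnd : NondegenerateAtInfinity f)
    (q x : Fin n → ℝ) (hx : ∀ j, x j ≠ 0) (κ0 : Fin n →₀ ℕ) (h0 : κ0 ∈ f.support)
    (h : ∀ κ ∈ f.support, q ⬝ᵥ expVec κ0 ≤ q ⬝ᵥ expVec κ) (hd : q ⬝ᵥ expVec κ0 < 0) :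
    0 < eval x (facePoly f (NewtonFace f q)) := by
  refine lt_of_le_of_ne ((face_lower f m hm q x κ0 h0 h).2 hd) fun h00 => ?_
  refine hnd q (by rw [newton_facts f q κ0 h0 h]; exact hd) x hx ?_
  refine crit_of_min _ x hx fun y _ => ?_
  rw [← h00]
  exact (face_lower f m hm q y κ0 h0 h).2 hd

/-- Minimizing ultrafilter inside the torus, trivial in the variables that do not occur. -/
lemma exists_ultra {n : ℕ} (f : MvPolynomial (Fin n) ℝ) (m : ℝ)
    (hm : IsGLB (Set.range fun x : Fin n → ℝ => eval x f) m) :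
    ∃ U : Ultrafilter (Fin n → ℝ), Tendsto (fun x => eval x f) U (nhds m) ∧
      ∀ᶠ x in (U : Filter (Fin n → ℝ)), (∀ j, x j ≠ 0) ∧ ∀ j, j ∉ f.vars → x j = 1 := by
  let T : Set (Fin n → ℝ) := {x | (∀ j, x j ≠ 0) ∧ ∀ j, j ∉ f.vars → x j = 1}
  let G : Filter (Fin n → ℝ) := comap (fun x => eval x f) (nhds m) ⊓ principal T
  have hG : G.NeBot := by
    rw [inf_principal_neBot_iff]
    intro S hS
    obtain ⟨V, hV, hVS⟩ := hS
    obtain ⟨ε, hε, hεV⟩ := Metric.mem_nhds_iff.1 hV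
    obtain ⟨_, ⟨x, rfl⟩, -, hx⟩ := hm.exists_between (lt_add_of_pos_right m hε)
    simp only at hx
    let p : ℝ → Fin n → ℝ := fun s j => if j ∈ f.vars then x j + s else 1
    have hp0 : eval (p 0) f = eval x f := by
      refine eval₂Hom_congr' rfl (fun i hi _ => ?_) rfl
      simp [p, hi]
    have hpc : Continuous p := by
      refine continuous_pi fun j => ?_
      by_cases hj : j ∈ f.vars
      · simp only [p, hj, if_true]; fun_prop
      · simpa [p, hj] using continuous_const
    have h1 : ∀ᶠ s in nhdsWithin (0 : ℝ) (Ioi 0), eval (p s) f < m + ε := by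
      have : ContinuousAt (fun s => eval (p s) f) 0 :=
        ((MvPolynomial.continuous_eval f).comp hpc).continuousAt
      exact (this.eventually_lt_const (by simpa [hp0] using hx)).filter_mono nhdsWithin_le_nhds
    have h2 : ∀ᶠ s in nhdsWithin (0 : ℝ) (Ioi 0), ∀ j, p s j ≠ 0 := by
      refine eventually_all.2 fun j => ?_
      by_cases hj : j ∈ f.vars
      · by_cases hxj : x j = 0
        · filter_upwards [self_mem_nhdsWithin] with s hs
          simpa [p, hj, hxj] using (ne_of_gt hs)
        · have : ContinuousAt (fun s => p s j) 0 := ((continuous_apply j).comp hpc).continuousAt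
          exact (this.eventually_ne (by simpa [p, hj] using hxj)).filter_mono nhdsWithin_le_nhds
      · exact Eventually.of_forall fun s => by simp [p, hj]
    obtain ⟨s, hs1, hs2⟩ := (h1.and h2).exists
    refine ⟨p s, hVS (hεV ?_), hs2, fun j hj => by simp [p, hj]⟩
    have h3 : m ≤ eval (p s) f := hm.1 ⟨_, rfl⟩
    rw [Metric.mem_ball, Real.dist_eq, abs_lt]
    constructor <;> linarith
  refine ⟨Ultrafilter.of G, ?_, ?_⟩
  · exact tendsto_comap.mono_left ((Ultrafilter.of_le G).trans inf_le_left)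
  · exact ((Ultrafilter.of_le G).trans inf_le_right) (mem_principal_self T)

lemma exists_max {α ι : Type*} (U : Ultrafilter α) (S : Finset ι) (hS : S.Nonempty)
    (g : ι → α → ℝ) : ∃ i ∈ S, ∀ k ∈ S, ∀ᶠ a in (U : Filter α), g k a ≤ g i a := by
  by_contra hcon
  push Not at hcon
  have : ∀ᶠ a in (U : Filter α), ∀ i ∈ S, ∃ k ∈ S, g i a < g k a := by
    refine (Filter.eventually_all_finset S).2 fun i hi => ?_
    obtain ⟨k, hk, h⟩ := hcon i hi
    filter_upwards [h] with a ha
    exact ⟨k, hk, ha⟩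
  obtain ⟨a, ha⟩ := this.exists
  obtain ⟨i, hi, hmax⟩ := S.exists_max_image (fun i => g i a) hS
  obtain ⟨k, hk, hlt⟩ := ha i hi
  exact absurd (hmax k hk) (not_le.2 hlt)

/-- **Theorem 4.1 (Fermat's theorem at infinity).** -/
theorem fermat_at_infinity {n : ℕ} (f₀ : MvPolynomial (Fin n) ℝ)
    (hnc : ∃ x y : Fin n → ℝ, eval x f₀ ≠ eval y f₀)
    (hbdd : BddBelow (Set.range fun x : Fin n → ℝ => eval x f₀))
    (hnd : NondegenerateAtInfinity f₀)
    (fstar : ℝ) (hfstar : fstar = sInf (Set.range fun x : Fin n → ℝ => eval x f₀))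
    (hnotatt : ∀ x : Fin n → ℝ, eval x f₀ ≠ fstar) :
    ∃ (xs : Fin n → ℝ) (Δ₀ : Set (Fin n → ℝ)),
      (∀ j, xs j ≠ 0) ∧ BadFace f₀ Δ₀ ∧
      fstar = eval xs (facePoly f₀ Δ₀) ∧
      ∀ j, eval xs (pderiv j (facePoly f₀ Δ₀)) = 0 := by
  classical
  have hglb : IsGLB (Set.range fun x : Fin n → ℝ => eval x f₀) fstar := by
    rw [hfstar]; exact isGLB_csInf (Set.range_nonempty _) hbdd
  have hm : ∀ x, fstar ≤ eval x f₀ := fun x => hglb.1 ⟨x, rfl⟩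
  have hsupp : f₀.support.Nonempty := by
    rw [Finset.nonempty_iff_ne_empty, Ne, MvPolynomial.support_eq_empty]
    rintro rfl
    obtain ⟨x, y, hxy⟩ := hnc
    simp at hxy
  obtain ⟨U, hU, hT⟩ := exists_ultra f₀ fstar hglb
  -- signs
  have hsign : ∀ j, ∃ s : ℝ, s ≠ 0 ∧
      ∀ᶠ x in (U : Filter (Fin n → ℝ)), x j = s * Real.exp (Real.log |x j|) := by
    intro j
    have : ∀ᶠ x in (U : Filter (Fin n → ℝ)), 0 < x j ∨ x j < 0 := by
      filter_upwards [hT] with x hx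
      exact (hx.1 j).symm.lt_or_gt
    rcases Ultrafilter.eventually_or.1 this with h | h
    · refine ⟨1, one_ne_zero, ?_⟩
      filter_upwards [h] with x hx
      rw [Real.exp_log (abs_pos.2 hx.ne'), abs_of_pos hx, one_mul]
    · refine ⟨-1, by norm_num, ?_⟩
      filter_upwards [h] with x hx
      rw [Real.exp_log (abs_pos.2 hx.ne), abs_of_neg hx]; ring
  choose σ hσ0 hσ using hsign
  let y : (Fin n → ℝ) → Fin n → ℝ := fun x j => Real.log |x j|
  have hxy : ∀ᶠ x in (U : Filter (Fin n → ℝ)), x = fun j => σ j * Real.exp (y x j) := by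
    filter_upwards [eventually_all.2 hσ] with x hx
    funext j
    exact hx j
  -- some coordinate diverges
  obtain ⟨j0, hj0⟩ : ∃ j, Tendsto (fun x => y x j) U atTop := by
    by_contra hcon
    push Not at hcon
    have hlim : ∀ j, ∃ l : ℝ, Tendsto (fun x : Fin n → ℝ => x j) U (nhds l) := by
      intro j
      have he : ∃ l : ℝ, Tendsto (fun x => Real.exp (y x j)) U (nhds l) := by
        rcases ultra_trichotomy U (fun x => y x j) with h | h | ⟨c, h⟩
        · exact absurd h (hcon j)
        · exact ⟨0, Real.tendsto_exp_atBot.comp h⟩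
        · exact ⟨_, (Real.continuous_exp.tendsto c).comp h⟩
      obtain ⟨l, hl⟩ := he
      exact ⟨σ j * l, (hl.const_mul (σ j)).congr' (by filter_upwards [hσ j] with x hx using hx.symm)⟩
    choose l hl using hlim
    have h1 : Tendsto (fun x : Fin n → ℝ => x) U (nhds l) := tendsto_pi_nhds.2 hl
    have h2 := ((MvPolynomial.continuous_eval f₀).tendsto l).comp h1
    exact hnotatt l (tendsto_nhds_unique h2 hU)
  have hj0v : j0 ∈ f₀.vars := by
    by_contra hj
    obtain ⟨x, hx1, hx2⟩ := (hT.and (hj0.eventually_gt_atTop 0)).exists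
    simp [y, hx1.2 j0 hj] at hx2
  -- dominating monomial
  obtain ⟨κ0, hκ0, hmax⟩ := exists_max U f₀.support hsupp (fun κ x => y x ⬝ᵥ expVec κ)
  let F : Finset (Fin n → ℝ) :=
    insert (expVec κ0) (insert (Pi.single j0 1) (f₀.support.image fun κ => expVec κ - expVec κ0))
  obtain ⟨v, w, hvw⟩ := exists_direction (U : Filter (Fin n → ℝ)) y F
  have hF1 := hvw (expVec κ0) (by simp [F])
  have hF2 := hvw (Pi.single j0 1) (by simp [F])
  have hF3 : ∀ κ ∈ f₀.support, _ := fun κ hκ => hvw (expVec κ - expVec κ0)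
    (Finset.mem_insert_of_mem (Finset.mem_insert_of_mem (Finset.mem_image_of_mem _ hκ)))
  have hcase : ∀ κ ∈ f₀.support,
      (v ⬝ᵥ expVec κ = v ⬝ᵥ expVec κ0 ∧ Tendsto (fun x => y x ⬝ᵥ (expVec κ - expVec κ0)) U
        (nhds (w ⬝ᵥ (expVec κ - expVec κ0)))) ∨
      (v ⬝ᵥ expVec κ < v ⬝ᵥ expVec κ0 ∧ Tendsto (fun x => y x ⬝ᵥ (expVec κ - expVec κ0)) U
        atBot) := by
    intro κ hκ
    obtain ⟨h1, h2, h3⟩ := hF3 κ hκ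
    rcases ultra_trichotomy U (fun x => y x ⬝ᵥ (expVec κ - expVec κ0)) with h | h | ⟨c, h⟩
    · exfalso
      obtain ⟨x, hx1, hx2⟩ := ((hmax κ hκ).and (h.eventually_gt_atTop 0)).exists
      rw [dotProduct_sub] at hx2
      linarith
    · right
      have := h3 h
      rw [dotProduct_sub] at this
      exact ⟨by linarith, h⟩
    · left
      obtain ⟨h4, h5⟩ := h1 c h
      rw [dotProduct_sub] at h4
      exact ⟨by linarith, by rw [h5]; exact h⟩
  let q : Fin n → ℝ := -v
  have hq : ∀ κ ∈ f₀.support, q ⬝ᵥ expVec κ0 ≤ q ⬝ᵥ expVec κ := by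
    intro κ hκ
    simp only [q, neg_dotProduct]
    rcases hcase κ hκ with h | h <;> linarith [h.1]
  have hD : NewtonD f₀ q = q ⬝ᵥ expVec κ0 := newton_facts f₀ q κ0 hκ0 hq
  let xs : Fin n → ℝ := fun j => σ j * Real.exp (w j)
  have hxs : ∀ j, xs j ≠ 0 := fun j => mul_ne_zero (hσ0 j) (Real.exp_pos _).ne'
  have hlim : Tendsto (fun x => eval x f₀ * Real.exp (-(y x ⬝ᵥ expVec κ0))) U
      (nhds (eval xs (facePoly f₀ (NewtonFace f₀ q)) * Real.exp (-(w ⬝ᵥ expVec κ0)))) := by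
    have h1 : Tendsto (fun x => ∑ κ ∈ f₀.support, f₀.coeff κ * (∏ j, σ j ^ κ j) *
        Real.exp (y x ⬝ᵥ (expVec κ - expVec κ0))) U
        (nhds (∑ κ ∈ f₀.support, if q ⬝ᵥ expVec κ = NewtonD f₀ q then
          f₀.coeff κ * (∏ j, σ j ^ κ j) * Real.exp (w ⬝ᵥ (expVec κ - expVec κ0)) else 0)) := by
      refine tendsto_finsetSum _ fun κ hκ => ?_
      rcases hcase κ hκ with ⟨h1, h2⟩ | ⟨h1, h2⟩
      · rw [if_pos (by rw [hD]; simp only [q, neg_dotProduct]; linarith)]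
        exact ((Real.continuous_exp.tendsto _).comp h2).const_mul _
      · rw [if_neg (by rw [hD]; simp only [q, neg_dotProduct]; intro h; linarith)]
        simpa using (Real.tendsto_exp_atBot.comp h2).const_mul
          (f₀.coeff κ * (∏ j, σ j ^ κ j))
    have h2 : eval xs (facePoly f₀ (NewtonFace f₀ q)) * Real.exp (-(w ⬝ᵥ expVec κ0)) =
        ∑ κ ∈ f₀.support, if q ⬝ᵥ expVec κ = NewtonD f₀ q then
          f₀.coeff κ * (∏ j, σ j ^ κ j) * Real.exp (w ⬝ᵥ (expVec κ - expVec κ0)) else 0 := by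
      rw [eval_facePoly, Finset.sum_mul, Finset.sum_filter]
      refine Finset.sum_congr rfl fun κ _ => ?_
      split_ifs
      · rw [prod_scale, dotProduct_sub, sub_eq_add_neg, Real.exp_add]; ring
      · rfl
    rw [h2]
    refine h1.congr' ?_
    filter_upwards [hxy] with x hx
    conv_rhs => rw [hx]
    simp only [eval_eq', prod_scale, Finset.sum_mul]
    have hyy : y (fun j => σ j * Real.exp (y x j)) = y x := by rw [← hx]
    rw [hyy]
    refine Finset.sum_congr rfl fun κ _ => ?_
    rw [dotProduct_sub, sub_eq_add_neg, Real.exp_add]; ring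
  have heval0 : (0 : Fin n →₀ ℕ) ∉ f₀.support → fstar ≠ 0 := by
    intro h0 hf
    apply hnotatt 0
    rw [hf, MvPolynomial.eval_zero, MvPolynomial.constantCoeff_eq]
    exact MvPolynomial.notMem_support_iff.1 h0
  rcases ultra_trichotomy U (fun x => y x ⬝ᵥ expVec κ0) with h | h | ⟨c, h⟩
  · -- degree negative: the polynomial blows up
    exfalso
    have hd : q ⬝ᵥ expVec κ0 < 0 := by
      have := hF1.2.1 h
      simp only [q, neg_dotProduct]; linarith
    have hpos := mul_pos (face_pos f₀ fstar hm hnd q xs hxs κ0 hκ0 hq hd)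
      (Real.exp_pos (-(w ⬝ᵥ expVec κ0)))
    have h0 : Tendsto (fun x => eval x f₀ * Real.exp (-(y x ⬝ᵥ expVec κ0))) U
        (nhds (fstar * 0)) :=
      hU.mul (Real.tendsto_exp_atBot.comp (tendsto_neg_atTop_atBot.comp h))
    have := tendsto_nhds_unique hlim h0
    rw [mul_zero] at this
    linarith
  · -- degree positive: the infimum is `f 0`
    exfalso
    have hconst : (0 : Fin n →₀ ℕ) ∉ f₀.support := by
      intro h0
      obtain ⟨x, hx1, hx2⟩ := ((hmax 0 h0).and (h.eventually_lt_atBot 0)).exists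
      have : expVec (0 : Fin n →₀ ℕ) = 0 := by ext j; simp [expVec]
      rw [this, dotProduct_zero] at hx1
      linarith
    apply heval0 hconst
    have h0 := hlim.mul (Real.tendsto_exp_atBot.comp h)
    rw [mul_zero] at h0
    refine tendsto_nhds_unique hU (h0.congr fun x => ?_)
    simp only [Function.comp]
    rw [mul_assoc, ← Real.exp_add, neg_add_cancel, Real.exp_zero, mul_one]
  · obtain ⟨hv0, hwc⟩ := hF1.1 c h
    have hq0 : q ⬝ᵥ expVec κ0 = 0 := by simp [q, hv0]
    have hfs : fstar = eval xs (facePoly f₀ (NewtonFace f₀ q)) := by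
      have h0 := hlim.mul ((Real.continuous_exp.tendsto c).comp h)
      have h1 : Tendsto (fun x => eval x f₀) U
          (nhds (eval xs (facePoly f₀ (NewtonFace f₀ q)) * Real.exp (-(w ⬝ᵥ expVec κ0)) *
            Real.exp c)) := by
        refine h0.congr fun x => ?_
        simp only [Function.comp]
        rw [mul_assoc, ← Real.exp_add, neg_add_cancel, Real.exp_zero, mul_one]
      rw [hwc, mul_assoc, ← Real.exp_add, neg_add_cancel, Real.exp_zero, mul_one] at h1
      exact tendsto_nhds_unique hU h1
    have hlow : ∀ z, fstar ≤ eval z (facePoly f₀ (NewtonFace f₀ q)) := fun z =>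
      (face_lower f₀ fstar hm q z κ0 hκ0 hq).1 hq0
    refine ⟨xs, NewtonFace f₀ q, hxs, ⟨⟨q, rfl⟩, ?_, q, ?_, ?_⟩, hfs, ?_⟩
    · by_contra hnot
      have hmemface : ∀ κ ∈ f₀.support, q ⬝ᵥ expVec κ = NewtonD f₀ q →
          expVec κ ∈ NewtonFace f₀ q := fun κ hκ hk =>
        ⟨subset_convexHull ℝ _ ⟨κ, hκ, rfl⟩, hk⟩
      obtain ⟨p, hp⟩ := exists_form_of_notMem (NewtonFace f₀ q)
        ⟨_, hmemface κ0 hκ0 hD.symm⟩ hnot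
      have hscale : ∀ s : ℝ, eval (fun j => xs j * Real.exp ((s • p) j))
          (facePoly f₀ (NewtonFace f₀ q)) = fstar * Real.exp s := by
        intro s
        rw [hfs, eval_facePoly, eval_facePoly, Finset.sum_mul]
        refine Finset.sum_congr rfl fun κ hκ => ?_
        obtain ⟨hκ1, hκ2⟩ := Finset.mem_filter.1 hκ
        rw [prod_scale, smul_dotProduct, hp _ (hmemface κ hκ1 hκ2), smul_eq_mul, mul_one, mul_assoc]
      have hle : ∀ s : ℝ, fstar ≤ fstar * Real.exp s := fun s => by
        rw [← hscale s]; exact hlow _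
      refine heval0 (fun h0 => ?_) ?_
      · have he : expVec (0 : Fin n →₀ ℕ) = 0 := by ext j; simp [expVec]
        have := hp _ (hmemface 0 h0 (by rw [hD, hq0, he, dotProduct_zero]))
        rw [he, dotProduct_zero] at this
        exact zero_ne_one this
      · have h1 := hle 1
        have h2 := hle (-1)
        have e1 : 1 < Real.exp 1 := Real.one_lt_exp_iff.2 one_pos
        have e2 : Real.exp (-1) < 1 := Real.exp_lt_one_iff.2 (by norm_num)
        nlinarith
    · have hvj : 0 < v j0 := by
        have := hF2.2.1 (by simpa using hj0)
        simpa using this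
      obtain ⟨κ, hκ, hκj⟩ := (mem_vars_iff_mem_support j0).1 hj0v
      have hex : ∃ i, v i < 0 := by
        by_contra hcon
        push Not at hcon
        have h1 : v ⬝ᵥ expVec κ ≤ 0 := by
          have := hq κ hκ
          rw [hq0] at this
          simp only [q, neg_dotProduct] at this
          linarith
        have h2 : 0 < v ⬝ᵥ expVec κ := by
          refine Finset.sum_pos' (fun i _ => mul_nonneg (hcon i) (Nat.cast_nonneg _))
            ⟨j0, Finset.mem_univ _, mul_pos hvj ?_⟩
          exact Nat.cast_pos.2 (Nat.pos_of_ne_zero (Finsupp.mem_support_iff.1 hκj))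
        linarith
      obtain ⟨i, hi⟩ := hex
      refine ⟨i, j0, ?_⟩
      simp only [q, Pi.neg_apply]
      nlinarith [mul_pos_of_neg_of_neg hi (neg_neg_of_pos hvj)]
    · ext z
      simp only [NewtonFace, mem_inter_iff, mem_ofPred_eq, hD, hq0]
      exact and_comm
    · exact crit_of_min _ xs hxs fun z _ => by rw [← hfs]; exact hlow z
end
end

section
/- Let f₀ : ℝⁿ → ℝ be a nonconstant polynomial function bounded from below on ℝⁿ and set f* := inf_{x ∈ ℝⁿ} f₀(x). Then f* ≤ c for every c ∈ K₀(f₀) ∪ Σ∞(f₀); in particular f* ≤ min{c : c ∈ K₀(f₀) ∪ Σ∞(f₀)} whenever this set is nonempty. -/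
open MvPolynomial Set Filter
open scoped Classical

noncomputable section

theorem facePoly_ge_aux {n : ℕ} (f : MvPolynomial (Fin n) ℝ) (Δ : Set (Fin n → ℝ))
    (q : Fin n → ℝ) (m : ℝ) (hm : ∀ x, m ≤ eval x f)
    (hpos : ∀ κ ∈ f.support, 0 ≤ ∑ j, q j * expVec κ j)
    (hΔ : ∀ κ ∈ f.support, (expVec κ ∈ Δ ↔ ∑ j, q j * expVec κ j = 0))
    (x : Fin n → ℝ) : m ≤ eval x (facePoly f Δ) := by
  have key : Tendsto (fun s : ℝ => eval (fun j => Real.exp (-s * q j) * x j) f) atTop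
      (nhds (eval x (facePoly f Δ))) := by
    have h1 : eval x (facePoly f Δ) = ∑ κ ∈ f.support,
        if expVec κ ∈ Δ then f.coeff κ * ∏ j, x j ^ κ j else 0 := by
      rw [facePoly, map_sum, Finset.sum_filter]
      refine Finset.sum_congr rfl fun κ _ => ?_
      split_ifs
      · rw [eval_monomial, Finsupp.prod_fintype _ _ (by simp)]
      · rfl
    have h2 : ∀ s : ℝ, eval (fun j => Real.exp (-s * q j) * x j) f = ∑ κ ∈ f.support,
        f.coeff κ * (Real.exp (-(s * ∑ j, q j * expVec κ j)) * ∏ j, x j ^ κ j) := by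
      intro s
      rw [eval_eq']
      refine Finset.sum_congr rfl fun κ _ => ?_
      congr 1
      simp_rw [mul_pow]
      rw [Finset.prod_mul_distrib]
      congr 1
      simp_rw [← Real.exp_nat_mul]
      rw [← Real.exp_sum, Finset.mul_sum, ← Finset.sum_neg_distrib]
      congr 1
      refine Finset.sum_congr rfl fun j _ => ?_
      simp only [expVec]
      ring
    rw [h1]
    simp_rw [h2]
    refine tendsto_finsetSum _ fun κ hκ => ?_
    split_ifs with h
    · rw [(hΔ κ hκ).1 h]
      simp
    · have hlt : 0 < ∑ j, q j * expVec κ j :=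
        lt_of_le_of_ne (hpos κ hκ) fun h0 => h ((hΔ κ hκ).2 h0.symm)
      have he : Tendsto (fun s : ℝ => Real.exp (-(s * ∑ j, q j * expVec κ j))) atTop (nhds 0) :=
        Real.tendsto_exp_neg_atTop_nhds_zero.comp (tendsto_id.atTop_mul_const hlt)
      simpa using (he.mul_const (∏ j, x j ^ κ j)).const_mul (f.coeff κ)
  exact ge_of_tendsto' key fun s => hm _

theorem newtonD_le_aux {n : ℕ} (f : MvPolynomial (Fin n) ℝ) (q κ : Fin n → ℝ)
    (hκ : κ ∈ NewtonPolyhedron f) : NewtonD f q ≤ ∑ j, q j * κ j := by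
  refine csInf_le ?_ ⟨κ, hκ, rfl⟩
  have hc : IsCompact (NewtonPolyhedron f) :=
    (f.support.finite_toSet.image expVec).isCompact_convexHull (𝕜 := ℝ)
  exact (hc.image (by fun_prop)).bddBelow

theorem badFace_sign_aux {n : ℕ} (f : MvPolynomial (Fin n) ℝ) (p q : Fin n → ℝ)
    (h : {κ : Fin n → ℝ | ∑ j, q j * κ j = 0} ∩ NewtonPolyhedron f = NewtonFace f p)
    (a b : Fin n → ℝ) (ha : a ∈ NewtonPolyhedron f) (hb : b ∈ NewtonPolyhedron f)
    (hqa : 0 < ∑ j, q j * a j) (hqb : ∑ j, q j * b j < 0) : False := by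
  have lin : ∀ (r : Fin n → ℝ) (s t : ℝ), ∑ j, r j * (s • a + t • b) j
      = s * ∑ j, r j * a j + t * ∑ j, r j * b j := by
    intro r s t
    rw [Finset.mul_sum, Finset.mul_sum, ← Finset.sum_add_distrib]
    refine Finset.sum_congr rfl fun j _ => ?_
    simp only [Pi.add_apply, Pi.smul_apply, smul_eq_mul]
    ring
  set A := ∑ j, q j * a j with hA
  set B := ∑ j, q j * b j with hB
  have hAB : 0 < A - B := by linarith
  have hs : 0 < -B / (A - B) := div_pos (by linarith) hAB
  have ht : 0 < A / (A - B) := div_pos hqa hAB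
  have hst : -B / (A - B) + A / (A - B) = 1 := by field_simp; ring
  have hc : (-B / (A - B)) • a + (A / (A - B)) • b ∈ NewtonPolyhedron f :=
    (convex_convexHull ℝ _) ha hb hs.le ht.le hst
  have hc0 : (-B / (A - B)) • a + (A / (A - B)) • b ∈ NewtonFace f p := by
    rw [← h]
    refine ⟨?_, hc⟩
    rw [Set.mem_setOf_eq, lin]
    simp only [← hA, ← hB]
    field_simp
    ring
  have h1 := hc0.2
  rw [lin] at h1
  have hpa := newtonD_le_aux f p a ha
  have hpb := newtonD_le_aux f p b hb
  have haF : a ∈ NewtonFace f p := by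
    refine ⟨ha, le_antisymm ?_ hpa⟩
    by_contra hlt
    push Not at hlt
    have e1 := mul_lt_mul_of_pos_left hlt hs
    have e2 := mul_le_mul_of_nonneg_left hpb ht.le
    have e3 : NewtonD f p = -B / (A - B) * NewtonD f p + A / (A - B) * NewtonD f p := by
      rw [← add_mul, hst, one_mul]
    linarith
  rw [← h] at haF
  exact hqa.ne' haF.1

/-- The optimal value is a lower bound for `K₀(f₀) ∪ Σ∞(f₀)`. -/
theorem optimal_value_le_critical {n : ℕ} (f₀ : MvPolynomial (Fin n) ℝ)
    (hnc : ∃ x y : Fin n → ℝ, eval x f₀ ≠ eval y f₀)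
    (hbdd : BddBelow (Set.range fun x : Fin n → ℝ => eval x f₀))
    (fstar : ℝ) (hfstar : fstar = sInf (Set.range fun x : Fin n → ℝ => eval x f₀)) :
    ∀ c ∈ K0 f₀ ∪ SigmaInfty f₀, fstar ≤ c := by
  have hm : ∀ x, fstar ≤ eval x f₀ := fun x => hfstar ▸ csInf_le hbdd ⟨x, rfl⟩
  rintro c (⟨x, -, rfl⟩ | ⟨Δ, ⟨⟨p, rfl⟩, -, q, -, hq⟩, x, -, rfl⟩)
  · exact hm x
  have hmem : ∀ κ ∈ f₀.support, expVec κ ∈ NewtonPolyhedron f₀ := fun κ hκ =>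
    subset_convexHull ℝ _ ⟨κ, hκ, rfl⟩
  have hiff : ∀ κ ∈ f₀.support,
      (expVec κ ∈ NewtonFace f₀ p ↔ ∑ j, q j * expVec κ j = 0) := by
    intro κ hκ
    rw [← hq]
    exact ⟨fun h => h.1, fun h => ⟨h, hmem κ hκ⟩⟩
  by_cases hs : ∀ κ ∈ f₀.support, 0 ≤ ∑ j, q j * expVec κ j
  · exact facePoly_ge_aux f₀ _ q fstar hm hs hiff x
  · push Not at hs
    obtain ⟨b, hb, hqb⟩ := hs
    refine facePoly_ge_aux f₀ _ (fun j => -q j) fstar hm ?_ ?_ x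
    · intro κ hκ
      by_contra hlt
      simp only [neg_mul, Finset.sum_neg_distrib] at hlt
      exact badFace_sign_aux f₀ p q hq _ _ (hmem κ hκ) (hmem b hb) (by linarith) hqb
    · intro κ hκ
      rw [hiff κ hκ]
      simp only [neg_mul, Finset.sum_neg_distrib, neg_eq_zero]
end
end
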